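/- arXiv:2107.05486 — 4 statements merged into one kernel-verified Lean document; each statement's English description precedes it below -/
import Mathlib

section
/- Let q, K ≥ 2 be integers. Then for all integers Δ > K·q^{K−1}·ln q + 1, there exists a K-uniform simple hypergraph H of maximum degree at most Δ that admits a proper q-colouring, together with two distinct vertices u, v of H such that the degree of u is 1, the degree of v is at most Δ, and every proper q-colouring σ of H satisfies σ(u) ≠ σ(v). -/
/-- The degree of a vertex `v` in a hypergraph with hyperedge set `E`:
the number of hyperedges containing `v`. -/
def hypDegree (E : Finset (Finset ℕ)) (v : ℕ) : ℕ :=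
  (E.filter (fun e => v ∈ e)).card

/-- A proper `q`-colouring: no hyperedge is monochromatic. -/
def ProperColouring (q : ℕ) (E : Finset (Finset ℕ)) (σ : ℕ → Fin q) : Prop :=
  ∀ e ∈ E, ¬ ∀ u ∈ e, ∀ w ∈ e, σ u = σ w

/-!
Let `U` be the set of vertices of degree below `Δ` in a simple hypergraph. A given colouring makes
at least a proportion `1 / q^(K-1)` of the `|U|^K` tuples monochromatic, by convexity, while only
`O(|U|^(K-1))` tuples are not admissible as a new edge. Hence, for `p < 1 / q^(K-1)` and `|U| ≥ M`
with `M` large, averaging gives a new edge that kills a proportion `p` of the surviving colourings.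
A hypergraph on `n` vertices that is maximal with this rate of killing has fewer than `M` vertices
of degree below `Δ`, thus at least `nΔ/K - O(1)` edges. The number of its proper colourings is at
most `q^n (1 - p)^(nΔ/K - O(1))`, which is less than `1` for `n` large as soon as
`p > K log q / Δ`.

Pass to a minimal non-colourable subhypergraph and let `e` be one of its edges. Every proper
colouring of the other edges is constant on `e`. Replacing a vertex `v` of `e` by a new vertex `u`
restores colourability and forces the colour of `u` to differ from that of `e` and hence of `v`.
-/

section Counting

open Finset

variable {ι α β : Type*}

theorem exists_mul_card_le_card_filter (r : α → β → Prop) [∀ a b, Decidable (r a b)]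
    {s : Finset α} {t : Finset β} {p : ℝ} (hs : s.Nonempty)
    (h : ∀ b ∈ t, p * #s ≤ #{a ∈ s | r a b}) : ∃ a ∈ s, p * #t ≤ #{b ∈ t | r a b} := by
  refine exists_le_of_sum_le hs ?_
  calc ∑ _a ∈ s, p * (#t : ℝ) = ∑ _b ∈ t, p * (#s : ℝ) := by
        simp only [sum_const, nsmul_eq_mul]; ring
    _ ≤ ∑ b ∈ t, (#{a ∈ s | r a b} : ℝ) := sum_le_sum h
    _ = ∑ a ∈ s, (#{b ∈ t | r a b} : ℝ) :=
        mod_cast (sum_card_bipartiteAbove_eq_sum_card_bipartiteBelow r).symm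

theorem exists_finset_card_le_forall_exists_eqOn [Fintype β] [Nonempty β] (s : Finset α) :
    ∃ T : Finset (α → β), #T ≤ Fintype.card β ^ #s ∧ ∀ σ, ∃ τ ∈ T, Set.EqOn τ σ s := by
  classical
  let extend (g : s → β) : α → β := Function.extend (↑) g fun _ => Classical.arbitrary β
  refine ⟨univ.image extend, card_image_le.trans (by simp), fun σ =>
    ⟨extend fun x => σ x, mem_image_of_mem _ (mem_univ _), fun x hx => ?_⟩⟩
  exact Subtype.val_injective.extend_apply (fun y : s => σ y) _ ⟨x, hx⟩

variable [Fintype ι] [DecidableEq ι] [DecidableEq α] [DecidableEq β]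

theorem card_filter_mem_apply_le (U : Finset α) {N : α → Finset α} {D : ℕ}
    (hN : ∀ x, #(N x) ≤ D) {i j : ι} (hij : i ≠ j) :
    #{f ∈ Fintype.piFinset fun _ : ι => U | f j ∈ N (f i)} ≤
      #U ^ (Fintype.card ι - 1) * D := by
  let rest : Finset ({k // k ≠ j} → α) := Fintype.piFinset fun _ => U
  calc #{f ∈ Fintype.piFinset fun _ : ι => U | f j ∈ N (f i)}
      ≤ #(rest.sigma fun g => N (g ⟨i, hij⟩)) := by
        refine card_le_card_of_injOn (fun f => ⟨fun k => f k, f j⟩) ?_ ?_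
        · intro f hf
          simp only [coe_filter, Fintype.mem_piFinset, Set.mem_ofPred_eq] at hf
          simpa [rest] using ⟨fun k _ => hf.1 k, hf.2⟩
        · intro f _ g _ hfg
          obtain ⟨hrest, hj⟩ := Sigma.mk.inj hfg
          funext k
          by_cases hk : k = j
          · exact hk ▸ eq_of_heq hj
          · exact congrFun hrest ⟨k, hk⟩
    _ ≤ #rest * D := by
        rw [card_sigma]
        exact sum_le_card_nsmul _ _ _ fun g _ => hN _
    _ = #U ^ (Fintype.card ι - 1) * D := by
        simp [rest, Fintype.card_subtype_compl]

/-- The `ι`-tuples of elements of `U` none of whose entries lies in the zone `N (f i)` excluded by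
another entry. When `N` is the neighbourhood in a linear hypergraph, the entries of such a tuple
may be joined by a new hyperedge. -/
def separatedTuples (ι : Type*) [Fintype ι] [DecidableEq ι] (U : Finset α) (N : α → Finset α) :
    Finset (ι → α) :=
  {f ∈ Fintype.piFinset fun _ => U | ∀ i j, i ≠ j → f j ∉ N (f i)}

theorem mem_separatedTuples {U : Finset α} {N : α → Finset α} {f : ι → α} :
    f ∈ separatedTuples ι U N ↔ (∀ i, f i ∈ U) ∧ ∀ i j, i ≠ j → f j ∉ N (f i) := by
  simp [separatedTuples]

theorem card_piFinset_sdiff_separatedTuples_le (U : Finset α) {N : α → Finset α} {D : ℕ}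
    (hN : ∀ x, #(N x) ≤ D) :
    #((Fintype.piFinset fun _ => U) \ separatedTuples ι U N) ≤
      Fintype.card ι ^ 2 * (#U ^ (Fintype.card ι - 1) * D) := by
  let bad (x : ι × ι) : Finset (ι → α) :=
    {f ∈ Fintype.piFinset fun _ => U | f x.2 ∈ N (f x.1)}
  have hsub : (Fintype.piFinset fun _ => U) \ separatedTuples ι U N ⊆
      univ.offDiag.biUnion bad := by
    intro f hf
    obtain ⟨hfU, hfsep⟩ := mem_sdiff.1 hf
    obtain ⟨i, j, hij, hfN⟩ : ∃ i j, i ≠ j ∧ f j ∈ N (f i) := by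
      simpa [separatedTuples, Fintype.mem_piFinset.1 hfU] using hfsep
    exact mem_biUnion.2 ⟨(i, j), by simpa using hij, mem_filter.2 ⟨hfU, hfN⟩⟩
  calc _ ≤ #(univ.offDiag.biUnion bad) := card_le_card hsub
    _ ≤ #(univ.offDiag : Finset (ι × ι)) * (#U ^ (Fintype.card ι - 1) * D) :=
        card_biUnion_le_card_mul _ _ _ fun x hx =>
          card_filter_mem_apply_le U hN (mem_offDiag.1 hx).2.2
    _ ≤ Fintype.card ι ^ 2 * (#U ^ (Fintype.card ι - 1) * D) := by
        gcongr
        rw [offDiag_card, card_univ, sq]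
        exact Nat.sub_le _ _

omit [DecidableEq α] in
theorem pow_card_div_le_card_filter_monochromatic [Nonempty ι] [Fintype β] (U : Finset α)
    (σ : α → β) :
    (#U : ℝ) ^ Fintype.card ι / (Fintype.card β : ℝ) ^ (Fintype.card ι - 1) ≤
      #{f ∈ Fintype.piFinset fun _ : ι => U | ∀ i j, σ (f i) = σ (f j)} := by
  classical
  let fibre (c : β) : Finset α := {x ∈ U | σ x = c}
  have hdisj : Set.PairwiseDisjoint (univ : Finset β)
      fun c => Fintype.piFinset fun _ : ι => fibre c := by
    intro c _ d _ hcd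
    refine disjoint_left.2 fun f hfc hfd => hcd ?_
    simp only [Fintype.mem_piFinset, fibre, mem_filter] at hfc hfd
    obtain ⟨i⟩ := ‹Nonempty ι›
    exact (hfc i).2.symm.trans (hfd i).2
  have hfibres : ∑ c, #(fibre c) ^ Fintype.card ι ≤
      #{f ∈ Fintype.piFinset fun _ : ι => U | ∀ i j, σ (f i) = σ (f j)} := by
    calc ∑ c, #(fibre c) ^ Fintype.card ι
        = #(univ.biUnion fun c => Fintype.piFinset fun _ : ι => fibre c) := by
          rw [card_biUnion hdisj]
          simp
      _ ≤ _ := by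
          refine card_le_card fun f hf => ?_
          simp only [mem_biUnion, mem_univ, true_and, Fintype.mem_piFinset, fibre,
            mem_filter] at hf ⊢
          obtain ⟨c, hc⟩ := hf
          exact ⟨fun i => (hc i).1, fun i j => (hc i).2.trans (hc j).2.symm⟩
  have hsum : ∑ c, (#(fibre c) : ℝ) = #U :=
    mod_cast (card_eq_sum_card_fiberwise fun x _ => mem_coe.2 (mem_univ (σ x))).symm
  calc (#U : ℝ) ^ Fintype.card ι / (Fintype.card β : ℝ) ^ (Fintype.card ι - 1)
      ≤ ∑ c, (#(fibre c) : ℝ) ^ Fintype.card ι := by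
        have := pow_sum_div_card_le_sum_pow (s := univ) (f := fun c => (#(fibre c) : ℝ))
          (fun _ _ => by positivity) (Fintype.card ι - 1)
        rwa [hsum, Nat.sub_add_cancel Fintype.card_pos, card_univ] at this
    _ ≤ _ := mod_cast hfibres

theorem mul_pow_card_lt_card_separatedTuples_monochromatic [Nonempty ι] [Fintype β]
    {U : Finset α} {N : α → Finset α} {D : ℕ} (hN : ∀ x, #(N x) ≤ D) {p : ℝ}
    (hU : (Fintype.card ι ^ 2 * D : ℝ) <
      (1 / (Fintype.card β : ℝ) ^ (Fintype.card ι - 1) - p) * #U) (σ : α → β) :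
    p * (#U : ℝ) ^ Fintype.card ι <
      #{f ∈ separatedTuples ι U N | ∀ i j, σ (f i) = σ (f j)} := by
  have hUpos : (0 : ℝ) < #U := by
    refine Nat.cast_pos.2 (Nat.pos_of_ne_zero fun h => ?_)
    have : (0 : ℝ) ≤ Fintype.card ι ^ 2 * D := by positivity
    rw [h, Nat.cast_zero, mul_zero] at hU
    linarith
  have hgap : Fintype.card ι ^ 2 * (#U ^ (Fintype.card ι - 1) * D) <
      (#U : ℝ) ^ Fintype.card ι / (Fintype.card β : ℝ) ^ (Fintype.card ι - 1) -
        p * #U ^ Fintype.card ι := by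
    calc (Fintype.card ι ^ 2 * (#U ^ (Fintype.card ι - 1) * D) : ℝ)
        = (Fintype.card ι ^ 2 * D) * #U ^ (Fintype.card ι - 1) := by ring
      _ < (1 / (Fintype.card β : ℝ) ^ (Fintype.card ι - 1) - p) * #U *
            #U ^ (Fintype.card ι - 1) := by gcongr
      _ = _ := by
        rw [mul_assoc, mul_pow_sub_one Fintype.card_ne_zero]
        ring
  have hsplit : #{f ∈ Fintype.piFinset fun _ : ι => U | ∀ i j, σ (f i) = σ (f j)} ≤
      #{f ∈ separatedTuples ι U N | ∀ i j, σ (f i) = σ (f j)} +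
        #((Fintype.piFinset fun _ => U) \ separatedTuples ι U N) := by
    refine (card_le_card fun f hf => ?_).trans (card_union_le _ _)
    simp only [mem_union, mem_filter, mem_sdiff] at hf ⊢
    tauto
  have hupper : (#{f ∈ Fintype.piFinset fun _ : ι => U | ∀ i j, σ (f i) = σ (f j)} : ℝ) ≤
      #{f ∈ separatedTuples ι U N | ∀ i j, σ (f i) = σ (f j)} +
        Fintype.card ι ^ 2 * (#U ^ (Fintype.card ι - 1) * D) :=
    mod_cast hsplit.trans (Nat.add_le_add_left (card_piFinset_sdiff_separatedTuples_le U hN) _)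
  linarith [pow_card_div_le_card_filter_monochromatic (ι := ι) U σ]

theorem exists_mem_separatedTuples_mul_card_le [Nonempty ι] [Fintype β] [Nonempty β]
    {U : Finset α} {N : α → Finset α} {D : ℕ} (hN : ∀ x, #(N x) ≤ D) {p : ℝ} (hp : 0 ≤ p)
    (hU : (Fintype.card ι ^ 2 * D : ℝ) <
      (1 / (Fintype.card β : ℝ) ^ (Fintype.card ι - 1) - p) * #U) (S : Finset (α → β)) :
    ∃ f ∈ separatedTuples ι U N, p * #S ≤ #{σ ∈ S | ∀ i j, σ (f i) = σ (f j)} := by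
  have hlt := mul_pow_card_lt_card_separatedTuples_monochromatic (ι := ι) (β := β) hN hU
  have hne : (separatedTuples ι U N).Nonempty := by
    have hpos := (by positivity : 0 ≤ p * (#U : ℝ) ^ Fintype.card ι).trans_lt
      (hlt fun _ => Classical.arbitrary β)
    exact (card_pos.1 (Nat.cast_pos.1 hpos)).mono (filter_subset _ _)
  have hcard : (#(separatedTuples ι U N) : ℝ) ≤ (#U : ℝ) ^ Fintype.card ι := by
    have : #(separatedTuples ι U N) ≤ #(Fintype.piFinset fun _ : ι => U) := card_filter_le _ _
    rw [Fintype.card_piFinset, prod_const, card_univ] at this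
    exact mod_cast this
  exact exists_mul_card_le_card_filter _ hne fun σ _ =>
    (mul_le_mul_of_nonneg_left hcard hp).trans (hlt σ).le

end Counting

section Hypergraph

open Finset

variable {q K Δ : ℕ} {E F : Finset (Finset ℕ)} {e : Finset ℕ} {u v w : ℕ}

theorem hypDegree_mono (h : F ⊆ E) (w : ℕ) : hypDegree F w ≤ hypDegree E w :=
  card_le_card (filter_subset_filter _ h)

theorem hypDegree_eq_zero (h : ∀ e ∈ E, w ∉ e) : hypDegree E w = 0 :=
  card_eq_zero.2 (filter_eq_empty_iff.2 h)

theorem hypDegree_erase_lt (he : e ∈ E) (hw : w ∈ e) : hypDegree (E.erase e) w < hypDegree E w := by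
  unfold hypDegree
  rw [filter_erase]
  exact card_erase_lt_of_mem (mem_filter.2 ⟨he, hw⟩)

theorem hypDegree_insert_of_mem (he : e ∉ E) (hw : w ∈ e) :
    hypDegree (insert e E) w = hypDegree E w + 1 := by
  unfold hypDegree
  rw [filter_insert, if_pos hw, card_insert_of_notMem (fun h => he (mem_filter.1 h).1)]

theorem hypDegree_insert_of_notMem (hw : w ∉ e) : hypDegree (insert e E) w = hypDegree E w := by
  unfold hypDegree
  rw [filter_insert, if_neg hw]

theorem properColouring_insert {σ : ℕ → Fin q} :
    ProperColouring q (insert e E) σ ↔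
      (¬ ∀ u ∈ e, ∀ w ∈ e, σ u = σ w) ∧ ProperColouring q E σ :=
  forall_mem_insert _ _ _

theorem ProperColouring.congr {σ τ : ℕ → Fin q} (h : ProperColouring q E σ)
    (hστ : ∀ e ∈ E, Set.EqOn τ σ e) : ProperColouring q E τ := by
  intro e he hmono
  refine h e he fun a ha b hb => ?_
  rw [← hστ e he ha, ← hστ e he hb]
  exact hmono a ha b hb

/-- `E` is the hyperedge set of a `K`-uniform simple hypergraph of maximum degree at most `Δ`. -/
structure IsSimpleUniform (K Δ : ℕ) (E : Finset (Finset ℕ)) : Prop where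
  card_eq : ∀ e ∈ E, #e = K
  card_inter_le_one : ∀ e₁ ∈ E, ∀ e₂ ∈ E, e₁ ≠ e₂ → #(e₁ ∩ e₂) ≤ 1
  hypDegree_le : ∀ w, hypDegree E w ≤ Δ

namespace IsSimpleUniform

theorem empty : IsSimpleUniform K Δ ∅ where
  card_eq := by simp
  card_inter_le_one := by simp
  hypDegree_le := by simp [hypDegree]

theorem mono (hE : IsSimpleUniform K Δ E) (hFE : F ⊆ E) : IsSimpleUniform K Δ F where
  card_eq e he := hE.card_eq e (hFE he)
  card_inter_le_one e₁ h₁ e₂ h₂ := hE.card_inter_le_one e₁ (hFE h₁) e₂ (hFE h₂)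
  hypDegree_le w := (hypDegree_mono hFE w).trans (hE.hypDegree_le w)

protected theorem insert (hE : IsSimpleUniform K Δ E) (heE : e ∉ E) (he : #e = K)
    (hinter : ∀ g ∈ E, #(e ∩ g) ≤ 1) (hdeg : ∀ w ∈ e, hypDegree E w < Δ) :
    IsSimpleUniform K Δ (insert e E) where
  card_eq := (forall_mem_insert _ _ _).2 ⟨he, hE.card_eq⟩
  card_inter_le_one e₁ h₁ e₂ h₂ hne := by
    rcases mem_insert.1 h₁ with rfl | h₁E <;> rcases mem_insert.1 h₂ with rfl | h₂E
    · exact absurd rfl hne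
    · exact hinter e₂ h₂E
    · exact inter_comm e₁ e₂ ▸ hinter e₁ h₁E
    · exact hE.card_inter_le_one e₁ h₁E e₂ h₂E hne
  hypDegree_le w := by
    by_cases hw : w ∈ e
    · rw [hypDegree_insert_of_mem heE hw]
      exact hdeg w hw
    · rw [hypDegree_insert_of_notMem hw]
      exact hE.hypDegree_le w

theorem card_mul_le (hE : IsSimpleUniform K Δ E) (V : Finset ℕ) (d : ℕ) :
    #V * d ≤ #E * K + #{w ∈ V | hypDegree E w < d} * d := by
  let W := {w ∈ V | ¬ hypDegree E w < d}
  have hW : #W * d ≤ #E * K :=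
    calc #W * d ≤ ∑ e ∈ E, #(W ∩ e) :=
          le_sum_card_inter fun w hw => not_lt.1 (mem_filter.1 hw).2
      _ ≤ ∑ e ∈ E, #e := sum_le_sum fun _ _ => card_le_card inter_subset_right
      _ = #E * K := sum_const_nat hE.card_eq
  calc #V * d = #W * d + #{w ∈ V | hypDegree E w < d} * d := by
        rw [← card_filter_add_card_filter_not (s := V) (hypDegree E · < d), add_comm, add_mul]
    _ ≤ _ := Nat.add_le_add_right hW _

end IsSimpleUniform

/-- The closed neighbourhood of the vertex `x`: `x` itself and the vertices sharing a hyperedge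
with it, none of which may share a second hyperedge with `x` in a simple hypergraph. -/
def closedNeighbourhood (E : Finset (Finset ℕ)) (x : ℕ) : Finset ℕ :=
  insert x ((E.filter (x ∈ ·)).biUnion id)

theorem mem_closedNeighbourhood {x y : ℕ} :
    y ∈ closedNeighbourhood E x ↔ y = x ∨ ∃ e ∈ E, x ∈ e ∧ y ∈ e := by
  simp [closedNeighbourhood, and_assoc]

theorem IsSimpleUniform.card_closedNeighbourhood_le (hE : IsSimpleUniform K Δ E) (x : ℕ) :
    #(closedNeighbourhood E x) ≤ Δ * K + 1 := by
  refine (card_insert_le _ _).trans (Nat.add_le_add_right ?_ 1)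
  calc #((E.filter (x ∈ ·)).biUnion id) ≤ hypDegree E x * K :=
        card_biUnion_le_card_mul _ _ _ fun e he => (hE.card_eq e (mem_filter.1 he).1).le
    _ ≤ Δ * K := Nat.mul_le_mul_right K (hE.hypDegree_le x)

section Separated

variable {f : Fin K → ℕ} (hf : ∀ i j, i ≠ j → f j ∉ closedNeighbourhood E (f i))

include hf

theorem injective_of_forall_notMem_closedNeighbourhood : Function.Injective f := by
  intro i j hij
  by_contra hne
  exact hf i j hne (mem_closedNeighbourhood.2 (Or.inl hij.symm))

theorem card_image_inter_le_one (he : e ∈ E) : #(univ.image f ∩ e) ≤ 1 := by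
  refine card_le_one.2 fun a ha b hb => ?_
  simp only [mem_inter, mem_image, mem_univ, true_and] at ha hb
  obtain ⟨⟨i, rfl⟩, hi⟩ := ha
  obtain ⟨⟨j, rfl⟩, hj⟩ := hb
  by_contra hne
  exact hf i j (fun h => hne (congrArg f h)) (mem_closedNeighbourhood.2 (Or.inr ⟨e, he, hi, hj⟩))

end Separated

theorem IsSimpleUniform.exists_insert_mul_card_le [NeZero q] (hK : 2 ≤ K)
    (hE : IsSimpleUniform K Δ E) {p : ℝ} (hp : 0 ≤ p) {U : Finset ℕ}
    (hUΔ : ∀ w ∈ U, hypDegree E w < Δ)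
    (hU : (K ^ 2 * (Δ * K + 1) : ℝ) < (1 / (q : ℝ) ^ (K - 1) - p) * #U)
    (S : Finset (ℕ → Fin q)) :
    ∃ e ⊆ U, e ∉ E ∧ IsSimpleUniform K Δ (insert e E) ∧
      p * #S ≤ #{σ ∈ S | ∀ u ∈ e, ∀ w ∈ e, σ u = σ w} := by
  have : NeZero K := ⟨by omega⟩
  obtain ⟨f, hf, hfS⟩ := exists_mem_separatedTuples_mul_card_le (ι := Fin K)
    hE.card_closedNeighbourhood_le hp (by simpa using hU) S
  obtain ⟨hfU, hfsep⟩ := mem_separatedTuples.1 hf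
  have hsub : univ.image f ⊆ U := image_subset_iff.2 fun i _ => hfU i
  have hcard : #(univ.image f) = K := by
    rw [card_image_of_injective _ (injective_of_forall_notMem_closedNeighbourhood hfsep),
      card_univ, Fintype.card_fin]
  have hnotMem : univ.image f ∉ E := fun h => by
    have := card_image_inter_le_one hfsep h
    rw [inter_self] at this
    omega
  exact ⟨univ.image f, hsub, hnotMem,
    hE.insert hnotMem hcard (fun _ => card_image_inter_le_one hfsep) fun w hw => hUΔ w (hsub hw),
    hfS.trans (mod_cast card_le_card fun σ hσ => by simpa using hσ)⟩

open scoped Classical in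
theorem card_filter_properColouring_insert_le {p : ℝ} {T : Finset (ℕ → Fin q)}
    (he : p * #{σ ∈ T | ProperColouring q E σ} ≤
      #{σ ∈ {σ ∈ T | ProperColouring q E σ} | ∀ u ∈ e, ∀ w ∈ e, σ u = σ w}) :
    (#{σ ∈ T | ProperColouring q (insert e E) σ} : ℝ) ≤
      (1 - p) * #{σ ∈ T | ProperColouring q E σ} := by
  set S := {σ ∈ T | ProperColouring q E σ}
  have hinsert : {σ ∈ T | ProperColouring q (insert e E) σ} =
      {σ ∈ S | ¬ ∀ u ∈ e, ∀ w ∈ e, σ u = σ w} := by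
    ext σ
    simp only [S, mem_filter, properColouring_insert]
    tauto
  have hsplit : (#{σ ∈ S | ∀ u ∈ e, ∀ w ∈ e, σ u = σ w} : ℝ) +
      #{σ ∈ S | ¬ ∀ u ∈ e, ∀ w ∈ e, σ u = σ w} = #S :=
    mod_cast card_filter_add_card_filter_not _
  rw [hinsert]
  linarith

open scoped Classical in
theorem exists_isSimpleUniform_card_properColouring_le [NeZero q] (hK : 2 ≤ K) {p : ℝ}
    (hp₀ : 0 ≤ p) (hp₁ : p ≤ 1) {M : ℕ}
    (hM : (K ^ 2 * (Δ * K + 1) : ℝ) < (1 / (q : ℝ) ^ (K - 1) - p) * M) (V : Finset ℕ)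
    (T : Finset (ℕ → Fin q)) :
    ∃ E, IsSimpleUniform K Δ E ∧ (∀ e ∈ E, e ⊆ V) ∧ #{w ∈ V | hypDegree E w < Δ} < M ∧
      (#{σ ∈ T | ProperColouring q E σ} : ℝ) ≤ (1 - p) ^ #E * #T := by
  let admissible : Finset (Finset (Finset ℕ)) := {E ∈ V.powerset.powerset |
    IsSimpleUniform K Δ E ∧ (#{σ ∈ T | ProperColouring q E σ} : ℝ) ≤ (1 - p) ^ #E * #T}
  have hempty : ∅ ∈ admissible := by
    simp only [admissible, mem_filter, empty_mem_powerset, card_empty, pow_zero, one_mul,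
      true_and]
    exact ⟨IsSimpleUniform.empty, mod_cast card_filter_le _ _⟩
  obtain ⟨E, hEadm, hmax⟩ := exists_max_image admissible card ⟨∅, hempty⟩
  obtain ⟨hEV, hE, hcount⟩ := mem_filter.1 hEadm
  refine ⟨E, hE, fun e he => mem_powerset.1 (mem_powerset.1 hEV he), ?_, hcount⟩
  by_contra! hMle
  have hU : (K ^ 2 * (Δ * K + 1) : ℝ) <
      (1 / (q : ℝ) ^ (K - 1) - p) * #{w ∈ V | hypDegree E w < Δ} := by
    have hgap : 0 < 1 / (q : ℝ) ^ (K - 1) - p :=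
      pos_of_mul_pos_left ((by positivity : (0 : ℝ) ≤ _).trans_lt hM) M.cast_nonneg
    exact hM.trans_le (by gcongr)
  obtain ⟨e, heU, heE, heins, hemono⟩ := hE.exists_insert_mul_card_le hK hp₀
    (fun w hw => (mem_filter.1 hw).2) hU {σ ∈ T | ProperColouring q E σ}
  have hinsert : insert e E ∈ admissible := by
    refine mem_filter.2 ⟨?_, heins, ?_⟩
    · exact mem_powerset.2 (insert_subset (mem_powerset.2 (heU.trans (filter_subset _ _)))
        (mem_powerset.1 hEV))
    · calc (#{σ ∈ T | ProperColouring q (insert e E) σ} : ℝ)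
          ≤ (1 - p) * #{σ ∈ T | ProperColouring q E σ} :=
            card_filter_properColouring_insert_le hemono
        _ ≤ (1 - p) * ((1 - p) ^ #E * #T) := by gcongr
        _ = (1 - p) ^ #(insert e E) * #T := by rw [card_insert_of_notMem heE]; ring
  have := hmax _ hinsert
  rw [card_insert_of_notMem heE] at this
  omega

theorem pow_mul_one_sub_pow_lt_one {a p : ℝ} (ha : 0 < a) (hp : p ≤ 1) {n m : ℕ}
    (h : n * Real.log a < m * p) : a ^ n * (1 - p) ^ m < 1 :=
  calc a ^ n * (1 - p) ^ m ≤ Real.exp (Real.log a) ^ n * Real.exp (-p) ^ m := by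
        rw [Real.exp_log ha]
        gcongr
        exact Real.one_sub_le_exp_neg p
    _ = Real.exp (n * Real.log a - m * p) := by
        rw [← Real.exp_nat_mul, ← Real.exp_nat_mul, ← Real.exp_add]
        ring_nf
    _ < 1 := Real.exp_lt_one_iff.2 (by linarith)

open scoped Classical in
theorem not_properColouring_of_card_lt_one {V : Finset ℕ} (hEV : ∀ e ∈ E, e ⊆ V)
    {T : Finset (ℕ → Fin q)} (hT : ∀ σ, ∃ τ ∈ T, Set.EqOn τ σ V)
    (hcard : #{σ ∈ T | ProperColouring q E σ} < 1) (σ : ℕ → Fin q) : ¬ ProperColouring q E σ := by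
  intro hσ
  obtain ⟨τ, hτT, hτ⟩ := hT σ
  have hτE : ProperColouring q E τ := hσ.congr fun e he => hτ.mono (coe_subset.2 (hEV e he))
  exact hcard.not_ge (card_pos.2 ⟨τ, mem_filter.2 ⟨hτT, hτE⟩⟩)

theorem exists_isSimpleUniform_not_properColouring (hq : 2 ≤ q) (hK : 2 ≤ K)
    (hΔ : (K : ℝ) * (q : ℝ) ^ (K - 1) * Real.log q < Δ) :
    ∃ E, IsSimpleUniform K Δ E ∧ ∀ σ, ¬ ProperColouring q E σ := by
  classical
  have : NeZero q := ⟨by omega⟩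
  have hq₀ : (0 : ℝ) < q := mod_cast (by omega : 0 < q)
  have hK₀ : (0 : ℝ) < K := mod_cast (by omega : 0 < K)
  have hΔ₀ : (0 : ℝ) < Δ := (mul_nonneg (by positivity) (Real.log_natCast_nonneg q)).trans_lt hΔ
  obtain ⟨p, hpΔ, hpq⟩ : ∃ p, K * Real.log q / Δ < p ∧ p < 1 / (q : ℝ) ^ (K - 1) := by
    refine exists_between ?_
    rw [div_lt_div_iff₀ hΔ₀ (by positivity)]
    linarith
  have hp₀ : 0 ≤ p :=
    (div_nonneg (mul_nonneg hK₀.le (Real.log_natCast_nonneg q)) hΔ₀.le).trans hpΔ.le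
  have hp₁ : p ≤ 1 := hpq.le.trans <|
    div_le_one_of_le₀ (one_le_pow₀ (mod_cast (by omega : 1 ≤ q))) (by positivity)
  obtain ⟨M, hM⟩ := exists_nat_gt ((K ^ 2 * (Δ * K + 1) : ℝ) / (1 / (q : ℝ) ^ (K - 1) - p))
  rw [div_lt_iff₀' (sub_pos.2 hpq)] at hM
  rw [div_lt_iff₀' hΔ₀] at hpΔ
  obtain ⟨n, hn⟩ := exists_nat_gt (M * Δ * p / (Δ * p - K * Real.log q))
  rw [div_lt_iff₀ (sub_pos.2 hpΔ)] at hn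
  obtain ⟨T, hTcard, hT⟩ := exists_finset_card_le_forall_exists_eqOn (β := Fin q) (range n)
  obtain ⟨E, hE, hEn, hEM, hcount⟩ :=
    exists_isSimpleUniform_card_properColouring_le hK hp₀ hp₁ hM (range n) T
  have hEcard : (n * Δ : ℝ) ≤ #E * K + M * Δ := by
    have := (hE.card_mul_le (range n) Δ).trans
      (Nat.add_le_add_left (Nat.mul_le_mul_right Δ hEM.le) _)
    rw [card_range] at this
    exact mod_cast this
  have hexp : n * Real.log q < #E * p := by
    refine lt_of_mul_lt_mul_left ?_ hK₀.le
    linarith [mul_le_mul_of_nonneg_right hEcard hp₀]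
  refine ⟨E, hE, not_properColouring_of_card_lt_one hEn hT (Nat.cast_lt (α := ℝ).1 ?_)⟩
  calc (#{σ ∈ T | ProperColouring q E σ} : ℝ) ≤ (1 - p) ^ #E * #T := hcount
    _ ≤ (1 - p) ^ #E * q ^ n := by
      gcongr
      simpa using (Nat.cast_le (α := ℝ)).2 hTcard
    _ < ((1 : ℕ) : ℝ) := by
      rw [mul_comm, Nat.cast_one]
      exact pow_mul_one_sub_pow_lt_one hq₀ hp₁ hexp

/-- The hypergraph obtained from `E` by putting the vertex `u` in the place of `v` in the
hyperedge `e`. In a critical non-colourable hypergraph, with `u` a new vertex, the edge `e` was the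
only obstruction to a colouring, so that the new edge forces `u` and `v` apart. -/
def replaceVertex (E : Finset (Finset ℕ)) (e : Finset ℕ) (v u : ℕ) : Finset (Finset ℕ) :=
  insert (insert u (e.erase v)) (E.erase e)

theorem ProperColouring.ne_of_replaceVertex {σ : ℕ → Fin q} (hE : ¬ ProperColouring q E σ)
    (he : e ∈ E) (hv : v ∈ e) (hσ : ProperColouring q (replaceVertex E e v u) σ) :
    σ u ≠ σ v := by
  obtain ⟨hnew, hold⟩ := properColouring_insert.1 hσ
  have hmono : ∀ a ∈ e, ∀ b ∈ e, σ a = σ b := by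
    by_contra hproper
    rw [← insert_erase he] at hE
    exact hE (properColouring_insert.2 ⟨hproper, hold⟩)
  intro huv
  have hconst : ∀ a ∈ insert u (e.erase v), σ a = σ v :=
    (forall_mem_insert _ _ _).2 ⟨huv, fun a ha => hmono a (mem_of_mem_erase ha) v hv⟩
  exact hnew fun a ha b hb => (hconst a ha).trans (hconst b hb).symm

section ReplaceVertex

variable (hu : ∀ g ∈ E, u ∉ g)

include hu

theorem insert_erase_notMem_erase : insert u (e.erase v) ∉ E.erase e :=
  fun h => hu _ (mem_of_mem_erase h) (mem_insert_self _ _)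

theorem hypDegree_replaceVertex_new : hypDegree (replaceVertex E e v u) u = 1 := by
  rw [replaceVertex, hypDegree_insert_of_mem (insert_erase_notMem_erase hu) (mem_insert_self _ _),
    hypDegree_eq_zero fun g hg => hu g (mem_of_mem_erase hg)]

theorem hypDegree_replaceVertex_lt (he : e ∈ E) (hv : v ∈ e) :
    hypDegree (replaceVertex E e v u) v < hypDegree E v := by
  have hvu : v ≠ u := fun h => hu e he (h ▸ hv)
  rw [replaceVertex, hypDegree_insert_of_notMem (by simp [hvu])]
  exact hypDegree_erase_lt he hv

protected theorem IsSimpleUniform.replaceVertex (hE : IsSimpleUniform K Δ E) (he : e ∈ E)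
    (hv : v ∈ e) :
    IsSimpleUniform K Δ (replaceVertex E e v u) := by
  have hdeg (w : ℕ) (hw : w ∈ e) : hypDegree (E.erase e) w < Δ :=
    (hypDegree_erase_lt he hw).trans_le (hE.hypDegree_le w)
  refine (hE.mono (erase_subset e E)).insert (insert_erase_notMem_erase hu) ?_ ?_ ?_
  · have hue : u ∉ e.erase v := fun h => hu e he (mem_of_mem_erase h)
    rw [card_insert_of_notMem hue, card_erase_add_one hv, hE.card_eq e he]
  · intro g hg
    obtain ⟨hge, hgE⟩ := mem_erase.1 hg
    rw [insert_inter_of_notMem (hu g hgE)]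
    exact (card_le_card (inter_subset_inter_right (erase_subset v e))).trans
      (hE.card_inter_le_one e he g hgE hge.symm)
  · refine (forall_mem_insert _ _ _).2 ⟨?_, fun w hw => hdeg w (mem_of_mem_erase hw)⟩
    rw [hypDegree_eq_zero fun g hg => hu g (mem_of_mem_erase hg)]
    exact (Nat.zero_le _).trans_lt (hdeg v hv)

theorem ProperColouring.exists_replaceVertex (hq : 2 ≤ q) {σ : ℕ → Fin q}
    (hσ : ProperColouring q (E.erase e) σ) (he : e ∈ E) (hw : w ∈ e.erase v) :
    ∃ τ, ProperColouring q (replaceVertex E e v u) τ := by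
  have : Nontrivial (Fin q) := Fin.nontrivial_iff_two_le.2 hq
  obtain ⟨c, hc⟩ := exists_ne (σ w)
  have hwu : w ≠ u := fun h => hu e he (h ▸ mem_of_mem_erase hw)
  refine ⟨Function.update σ u c, properColouring_insert.2 ⟨fun hmono => hc ?_, ?_⟩⟩
  · simpa [hwu] using hmono u (mem_insert_self _ _) w (mem_insert_of_mem hw)
  · refine hσ.congr fun g hg x hx => Function.update_of_ne ?_ _ _
    rintro rfl
    exact hu g (mem_of_mem_erase hg) hx

end ReplaceVertex

theorem exists_subset_critical (hE : ∀ σ, ¬ ProperColouring q E σ) :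
    ∃ F ⊆ E, (∀ σ, ¬ ProperColouring q F σ) ∧
      ∀ e ∈ F, ∃ σ, ProperColouring q (F.erase e) σ := by
  obtain ⟨F, hFE, hF⟩ := exists_minimal_le_of_wellFoundedLT
    (fun F : Finset (Finset ℕ) => ∀ σ, ¬ ProperColouring q F σ) E hE
  refine ⟨F, hFE, hF.prop, fun e he => ?_⟩
  simpa using hF.not_prop_of_lt (erase_ssubset he)

end Hypergraph

theorem stmt1_general (q K : ℕ) (hq : 2 ≤ q) (hK : 2 ≤ K) (Δ : ℕ)
    (hΔ : (K : ℝ) * (q : ℝ) ^ (K - 1) * Real.log q < Δ) :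
    ∃ (E : Finset (Finset ℕ)) (u v : ℕ),
      IsSimpleUniform K Δ E ∧ u ≠ v ∧ hypDegree E u = 1 ∧ hypDegree E v < Δ ∧
      (∃ σ : ℕ → Fin q, ProperColouring q E σ) ∧
      (∀ σ : ℕ → Fin q, ProperColouring q E σ → σ u ≠ σ v) := by
  obtain ⟨E, hE, hEcol⟩ := exists_isSimpleUniform_not_properColouring hq hK hΔ
  obtain ⟨F, hFE, hFcol, hcrit⟩ := exists_subset_critical hEcol
  have hF := hE.mono hFE
  obtain ⟨e, he⟩ : F.Nonempty := by
    rw [Finset.nonempty_iff_ne_empty]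
    rintro rfl
    exact hFcol (fun _ => ⟨0, by omega⟩) (by simp [ProperColouring])
  obtain ⟨σ, hσ⟩ := hcrit e he
  obtain ⟨v, hv, w, hw, hvw⟩ := Finset.one_lt_card.1 ((hF.card_eq e he).symm ▸ hK)
  obtain ⟨u, hu⟩ := Infinite.exists_notMem_finset (F.biUnion id)
  have hu : ∀ g ∈ F, u ∉ g := by simpa using hu
  exact ⟨replaceVertex F e v u, u, v, hF.replaceVertex hu he hv, fun h => hu e he (h ▸ hv),
    hypDegree_replaceVertex_new hu,
    (hypDegree_replaceVertex_lt hu he hv).trans_le (hF.hypDegree_le v),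
    hσ.exists_replaceVertex hu hq he (Finset.mem_erase.2 ⟨hvw.symm, hw⟩),
    fun τ => ProperColouring.ne_of_replaceVertex (hFcol τ) he hv⟩

/-- Let `q, K ≥ 2` be integers. Then for all integers `Δ > K·q^{K−1}·ln q + 1`, there exists a
`K`-uniform simple hypergraph `H` of maximum degree at most `Δ` that admits a proper
`q`-colouring, together with two distinct vertices `u, v` of `H` such that the degree of `u`
is `1`, the degree of `v` is at most `Δ`, and every proper `q`-colouring `σ` of `H` satisfies
`σ(u) ≠ σ(v)`. -/
theorem stmt1 (q K : ℕ) (hq : 2 ≤ q) (hK : 2 ≤ K) (Δ : ℕ)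
    (hΔ : (K : ℝ) * (q : ℝ) ^ (K - 1) * Real.log q + 1 < Δ) :
    ∃ (E : Finset (Finset ℕ)) (u v : ℕ),
      (∀ e ∈ E, e.card = K) ∧
      (∀ e₁ ∈ E, ∀ e₂ ∈ E, e₁ ≠ e₂ → (e₁ ∩ e₂).card ≤ 1) ∧
      (∀ w, hypDegree E w ≤ Δ) ∧
      u ≠ v ∧ hypDegree E u = 1 ∧ hypDegree E v ≤ Δ ∧
      (∃ σ : ℕ → Fin q, ProperColouring q E σ) ∧
      (∀ σ : ℕ → Fin q, ProperColouring q E σ → σ u ≠ σ v) := by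
  obtain ⟨E, u, v, hE, huv, hu, hv, hcol⟩ := stmt1_general q K hq hK Δ (by linarith)
  exact ⟨E, u, v, hE.card_eq, hE.card_inter_le_one, hE.hypDegree_le, huv, hu, hv.le, hcol⟩
end

section
/- For all integers q ≥ 4, k ≥ 2 and d ≥ 3q^k, the function h2(x) := ((x^{d+1} − 1)/(x^d − 1))^d·(q^k − q) − (x^d − 1)/(x − 1) + (q − 1)·x^d has exactly one root in the interval (1, ∞). -/
/-!
Write `S n x = ∑ i < n, x ^ i`. For `x > 1`, dividing `h2 x = 0` by `S d x` gives `F x = 1`, where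
`F = (q ^ k - q) * (S (d + 1)) ^ d / (S d) ^ (d + 1) + (q - 1) * x ^ d / S d`. On `[1, ∞)` the
second summand is strictly increasing. The first is increasing: for `1 ≤ x ≤ y` the ratios
`r n = S n y / S n x`, `n ≥ 1`, form a log-convex sequence with `r 1 ^ 2 ≤ r 2`, and hence, as in
Maclaurin's inequality, `r d ^ (d + 1) ≤ r (d + 1) ^ d`. Log-convexity comes from
`S (n + 1) ^ 2 = S n * S (n + 2) + x ^ n` and the monotonicity of the palindromic Laurent polynomial
`S (n + 1) (s ^ 2) / s ^ n`. Finally `F 1 ≤ (3 * (q ^ k - q) + (q - 1)) / d < 1`, while `F` is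
unbounded, so `F` takes the value `1` exactly once.
-/

section GeomSum

open Finset

theorem pow_succ_le_pow_of_sq_le_mul {R : Type*} [CommRing R] [LinearOrder R]
    [IsStrictOrderedRing R] {a : ℕ → R} {m n : ℕ} (hpos : ∀ i > m, 0 < a i)
    (hconvex : ∀ i ≥ m, a (i + 1) ^ 2 ≤ a i * a (i + 2))
    (hbase : a m ^ (m + 1) ≤ a (m + 1) ^ m) (hmn : m ≤ n) :
    a n ^ (n + 1) ≤ a (n + 1) ^ n := by
  induction n, hmn using Nat.le_induction with
  | base => exact hbase
  | succ n hmn ih =>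
    have hn1 := hpos (n + 1) (by omega)
    have hn2 := hpos (n + 2) (by omega)
    refine le_of_mul_le_mul_left ?_ (pow_pos hn1 n)
    calc a (n + 1) ^ n * a (n + 1) ^ (n + 1 + 1)
        = (a (n + 1) ^ 2) ^ (n + 1) := by ring
      _ ≤ (a n * a (n + 2)) ^ (n + 1) := by gcongr; exact hconvex n hmn
      _ = a n ^ (n + 1) * a (n + 2) ^ (n + 1) := mul_pow ..
      _ ≤ a (n + 1) ^ n * a (n + 2) ^ (n + 1) := by gcongr

theorem geom_sum_sq_eq_mul_add_pow {R : Type*} [CommSemiring R] (x : R) (n : ℕ) :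
    (∑ i ∈ range (n + 1), x ^ i) ^ 2 =
      (∑ i ∈ range n, x ^ i) * ∑ i ∈ range (n + 2), x ^ i + x ^ n := by
  have htop : ∑ i ∈ range (n + 1), x ^ i = ∑ i ∈ range n, x ^ i + x ^ n := sum_range_succ ..
  have hbot : ∑ i ∈ range (n + 1), x ^ i = x * ∑ i ∈ range n, x ^ i + 1 := geom_sum_succ
  calc (∑ i ∈ range (n + 1), x ^ i) ^ 2
      = (∑ i ∈ range n, x ^ i) * ∑ i ∈ range (n + 1), x ^ i
          + x ^ n * ∑ i ∈ range (n + 1), x ^ i := by rw [sq, ← add_mul, ← htop]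
    _ = (∑ i ∈ range n, x ^ i) * ∑ i ∈ range (n + 1), x ^ i
          + x ^ n * (x * ∑ i ∈ range n, x ^ i + 1) := by rw [← hbot]
    _ = _ := by rw [sum_range_succ _ (n + 1)]; ring

theorem mul_one_add_sq_le_mul_one_add_sq {R : Type*} [CommRing R] [LinearOrder R]
    [IsStrictOrderedRing R] {s t : R} (hst : s ≤ t) (hmul : 1 ≤ s * t) :
    t * (1 + s ^ 2) ≤ s * (1 + t ^ 2) := by
  linear_combination mul_nonneg (sub_nonneg.2 hst) (sub_nonneg.2 hmul)

theorem pow_mul_geom_sum_sq_le {R : Type*} [CommRing R] [LinearOrder R] [IsStrictOrderedRing R]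
    {s t : R} (hs : 0 ≤ s) (hst : s ≤ t) (hmul : 1 ≤ s * t) (n : ℕ) :
    t ^ n * ∑ i ∈ range (n + 1), (s ^ 2) ^ i ≤ s ^ n * ∑ i ∈ range (n + 1), (t ^ 2) ^ i := by
  have hpeel (u : R) (n : ℕ) : ∑ i ∈ range (n + 3), (u ^ 2) ^ i =
      u ^ 2 * ∑ i ∈ range (n + 1), (u ^ 2) ^ i + (1 + (u ^ (n + 2)) ^ 2) := by
    rw [sum_range_succ, geom_sum_succ]; ring
  induction n using Nat.twoStepInduction with
  | zero => simp
  | one => simpa [sum_range_succ] using mul_one_add_sq_le_mul_one_add_sq hst hmul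
  | more n ih _ =>
    have hends := mul_one_add_sq_le_mul_one_add_sq (pow_le_pow_left₀ hs hst (n + 2))
      (mul_pow s t (n + 2) ▸ one_le_pow₀ hmul)
    have hmiddle := mul_le_mul_of_nonneg_left ih (sq_nonneg (s * t))
    rw [hpeel, hpeel]
    linear_combination hends + hmiddle

theorem pow_mul_sq_geom_sum_le {x y : ℝ} (hx : 0 ≤ x) (hxy : x ≤ y) (hmul : 1 ≤ x * y) (n : ℕ) :
    y ^ n * (∑ i ∈ range (n + 1), x ^ i) ^ 2 ≤ x ^ n * (∑ i ∈ range (n + 1), y ^ i) ^ 2 := by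
  have hy : 0 ≤ y := hx.trans hxy
  have hmul_sqrt : 1 ≤ √x * √y := by rwa [← Real.sqrt_mul hx, Real.one_le_sqrt]
  have hroots := pow_mul_geom_sum_sq_le x.sqrt_nonneg (Real.sqrt_le_sqrt hxy) hmul_sqrt n
  have hsq := pow_le_pow_left₀ (by positivity) hroots 2
  simpa only [mul_pow, pow_right_comm _ n 2, Real.sq_sqrt hx, Real.sq_sqrt hy] using hsq

theorem sq_geom_sum_div_le {x y : ℝ} (hx : 0 ≤ x) (hxy : x ≤ y) (hmul : 1 ≤ x * y) {n : ℕ}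
    (hn : n ≠ 0) :
    ((∑ i ∈ range (n + 1), y ^ i) / ∑ i ∈ range (n + 1), x ^ i) ^ 2 ≤
      ((∑ i ∈ range n, y ^ i) / ∑ i ∈ range n, x ^ i) *
        ((∑ i ∈ range (n + 2), y ^ i) / ∑ i ∈ range (n + 2), x ^ i) := by
  have hn_pos : 0 < ∑ i ∈ range n, x ^ i := geom_sum_pos hx hn
  have hn1_pos : 0 < ∑ i ∈ range (n + 1), x ^ i := geom_sum_pos hx (by omega)
  have hn2_pos : 0 < ∑ i ∈ range (n + 2), x ^ i := geom_sum_pos hx (by omega)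
  rw [div_pow, div_mul_div_comm, div_le_div_iff₀ (by positivity) (by positivity)]
  linear_combination pow_mul_sq_geom_sum_le hx hxy hmul n
    + (∑ i ∈ range (n + 1), x ^ i) ^ 2 * geom_sum_sq_eq_mul_add_pow y n
    - (∑ i ∈ range (n + 1), y ^ i) ^ 2 * geom_sum_sq_eq_mul_add_pow x n

theorem geom_sum_div_pow_succ_le {x y : ℝ} (hx : 0 ≤ x) (hxy : x ≤ y) (hmul : 1 ≤ x * y) {n : ℕ}
    (hn : n ≠ 0) :
    ((∑ i ∈ range n, y ^ i) / ∑ i ∈ range n, x ^ i) ^ (n + 1) ≤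
      ((∑ i ∈ range (n + 1), y ^ i) / ∑ i ∈ range (n + 1), x ^ i) ^ n := by
  refine pow_succ_le_pow_of_sq_le_mul (m := 1)
    (a := fun i ↦ (∑ j ∈ range i, y ^ j) / ∑ j ∈ range i, x ^ j) (fun i hi ↦ ?_)
    (fun i hi ↦ sq_geom_sum_div_le hx hxy hmul (by omega)) ?_ (Nat.one_le_iff_ne_zero.2 hn)
  · exact div_pos (geom_sum_pos (hx.trans hxy) (by omega)) (geom_sum_pos hx (by omega))
  · have : 1 ≤ (1 + y) / (1 + x) := (one_le_div (by linarith)).2 (by linarith)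
    simpa [sum_range_succ] using this

theorem monotoneOn_geom_sum_div_pow_div {d : ℕ} (hd : d ≠ 0) :
    MonotoneOn (fun x : ℝ ↦ ((∑ i ∈ range (d + 1), x ^ i) / ∑ i ∈ range d, x ^ i) ^ d /
      ∑ i ∈ range d, x ^ i) (Set.Ici 1) := by
  intro x (hx : 1 ≤ x) y (hy : 1 ≤ y) hxy
  have hsum_x : 0 < ∑ i ∈ range d, x ^ i := geom_sum_pos (by linarith) hd
  have hsum_y : 0 < ∑ i ∈ range d, y ^ i := geom_sum_pos (by linarith) hd
  have hsucc_x : 0 < ∑ i ∈ range (d + 1), x ^ i := geom_sum_pos (by linarith) d.succ_ne_zero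
  have hmul : 1 ≤ x * y := one_le_mul_of_one_le_of_one_le hx hy
  have hratio := geom_sum_div_pow_succ_le (by linarith) hxy hmul hd
  rw [div_pow, div_pow, div_le_div_iff₀ (by positivity) (by positivity)] at hratio
  simp only [div_pow, div_div, ← pow_succ]
  rw [div_le_div_iff₀ (by positivity) (by positivity)]
  linarith

theorem strictMonoOn_pow_div_geom_sum {K : Type*} [Field K] [LinearOrder K]
    [IsStrictOrderedRing K] {d : ℕ} (hd : d ≠ 0) :
    StrictMonoOn (fun x : K ↦ x ^ d / ∑ i ∈ range d, x ^ i) (Set.Ioi 0) := by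
  intro x (hx : 0 < x) y (hy : 0 < y) hxy
  beta_reduce
  rw [div_lt_div_iff₀ (geom_sum_pos hx.le hd) (geom_sum_pos hy.le hd), mul_sum, mul_sum]
  refine sum_lt_sum_of_nonempty (nonempty_range_iff.2 hd) fun i hi ↦ ?_
  obtain ⟨j, rfl⟩ := Nat.exists_eq_add_of_lt (mem_range.1 hi)
  calc x ^ (i + j + 1) * y ^ i = (x * y) ^ i * x ^ (j + 1) := by ring
    _ < (x * y) ^ i * y ^ (j + 1) := by gcongr
    _ = y ^ (i + j + 1) * x ^ i := by ring

end GeomSum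

section Ratio

open Finset

/-- The quotient of the positive terms of `h2` by its negative term `(x ^ d - 1) / (x - 1)`, with
`M` and `c` in place of `q ^ k - q` and `q - 1`; the roots of `h2` in `(1, ∞)` are the points where
it equals `1`. It is written with geometric sums so that it is also continuous at `x = 1`. -/
noncomputable def h2Ratio (M c : ℝ) (d : ℕ) (x : ℝ) : ℝ :=
  (((∑ i ∈ range (d + 1), x ^ i) / ∑ i ∈ range d, x ^ i) ^ d * M + c * x ^ d) /
    ∑ i ∈ range d, x ^ i

variable {M c x : ℝ} {d : ℕ}

theorem h2_eq_zero_iff_h2Ratio_eq_one (hd : d ≠ 0) (hx : 1 < x) :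
    ((x ^ (d + 1) - 1) / (x ^ d - 1)) ^ d * M - (x ^ d - 1) / (x - 1) + c * x ^ d = 0 ↔
      h2Ratio M c d x = 1 := by
  have hx1 : x - 1 ≠ 0 := (sub_pos.2 hx).ne'
  have hsum : ∑ i ∈ range d, x ^ i ≠ 0 := (geom_sum_pos (by linarith) hd).ne'
  rw [h2Ratio, div_eq_one_iff_eq hsum, ← geom_sum_mul, ← geom_sum_mul,
    mul_div_mul_right _ _ hx1, mul_div_cancel_right₀ _ hx1, sub_add_eq_add_sub, sub_eq_zero]

theorem strictMonoOn_h2Ratio (hM : 0 ≤ M) (hc : 0 < c) (hd : d ≠ 0) :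
    StrictMonoOn (h2Ratio M c d) (Set.Ici 1) := by
  intro x hx y hy hxy
  have hfirst := monotoneOn_geom_sum_div_pow_div hd hx hy hxy.le
  have hsecond := strictMonoOn_pow_div_geom_sum hd (zero_lt_one.trans_le hx)
    (zero_lt_one.trans_le hy) hxy
  simp only [h2Ratio, add_div, mul_div_right_comm _ M, mul_div_assoc c]
  exact add_lt_add_of_le_of_lt (mul_le_mul_of_nonneg_right hfirst hM)
    (mul_lt_mul_of_pos_left hsecond hc)

theorem continuousOn_h2Ratio (hd : d ≠ 0) : ContinuousOn (h2Ratio M c d) (Set.Ici 0) := by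
  have hne (x : ℝ) (hx : x ∈ Set.Ici 0) : ∑ i ∈ range d, x ^ i ≠ 0 := (geom_sum_pos hx hd).ne'
  unfold h2Ratio
  fun_prop (disch := assumption)

theorem h2Ratio_one : h2Ratio M c d 1 = ((1 + (d : ℝ)⁻¹) ^ d * M + c) / d := by
  rcases eq_or_ne d 0 with rfl | hd
  · simp [h2Ratio]
  · have hsucc : ((d : ℝ) + 1) / d = 1 + (d : ℝ)⁻¹ := by field_simp
    simp [h2Ratio, hsucc]

theorem mul_sub_one_le_h2Ratio (hM : 0 ≤ M) (hc : 0 ≤ c) (hd : d ≠ 0) (hx : 1 ≤ x) :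
    c * (x - 1) ≤ h2Ratio M c d x := by
  have hsum : 0 < ∑ i ∈ range d, x ^ i := geom_sum_pos (by linarith) hd
  have hsucc : 0 < ∑ i ∈ range (d + 1), x ^ i := geom_sum_pos (by linarith) d.succ_ne_zero
  rw [h2Ratio, le_div_iff₀ hsum]
  calc c * (x - 1) * ∑ i ∈ range d, x ^ i = c * (x ^ d - 1) := by rw [← geom_sum_mul]; ring
    _ ≤ c * x ^ d := by gcongr; linarith
    _ ≤ _ := le_add_of_nonneg_left (by positivity)

theorem one_add_inv_pow_mul_sub_add_lt {q : ℝ} {k : ℕ} (hq : 1 ≤ q) (hk : k ≠ 0)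
    (hd : 3 * q ^ k ≤ d) : (1 + (d : ℝ)⁻¹) ^ d * (q ^ k - q) + (q - 1) < d := by
  have hM : 0 ≤ q ^ k - q := sub_nonneg.2 (le_self_pow₀ hq hk)
  have hexp : (1 + (d : ℝ)⁻¹) ^ d ≤ 3 :=
    Real.one_add_inv_pow_le_exp.trans Real.exp_one_lt_three.le
  calc (1 + (d : ℝ)⁻¹) ^ d * (q ^ k - q) + (q - 1)
      ≤ 3 * (q ^ k - q) + (q - 1) := by gcongr
    _ < 3 * q ^ k := by linarith
    _ ≤ d := hd

theorem stmt7_general (hM : 0 ≤ M) (hc : 0 < c) (h : (1 + (d : ℝ)⁻¹) ^ d * M + c < d) :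
    ∃! x : ℝ, 1 < x ∧
      ((x ^ (d + 1) - 1) / (x ^ d - 1)) ^ d * M - (x ^ d - 1) / (x - 1) + c * x ^ d = 0 := by
  have hd_pos : (0 : ℝ) < d := lt_of_le_of_lt (by positivity) h
  have hd : d ≠ 0 := by rintro rfl; simp at hd_pos
  have hleft : h2Ratio M c d 1 < 1 := by rwa [h2Ratio_one, div_lt_one hd_pos]
  have hright : 1 ≤ h2Ratio M c d (1 + c⁻¹) :=
    calc 1 = c * (1 + c⁻¹ - 1) := by field_simp; ring
      _ ≤ _ := mul_sub_one_le_h2Ratio hM hc.le hd (by simp [hc.le])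
  have hmono := strictMonoOn_h2Ratio hM hc hd
  obtain ⟨x, hx, hroot⟩ := intermediate_value_Icc (by simp [hc.le])
    ((continuousOn_h2Ratio hd).mono fun z hz ↦ zero_le_one.trans hz.1) ⟨hleft.le, hright⟩
  have hx1 : 1 < x := hx.1.lt_of_ne (by rintro rfl; exact hleft.ne hroot)
  refine ⟨x, ⟨hx1, (h2_eq_zero_iff_h2Ratio_eq_one hd hx1).2 hroot⟩, fun y ⟨hy1, hy⟩ ↦ ?_⟩
  exact hmono.injOn hy1.le hx1.le (((h2_eq_zero_iff_h2Ratio_eq_one hd hy1).1 hy).trans hroot.symm)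

end Ratio

/-- For all integers `q ≥ 4`, `k ≥ 2` and `d ≥ 3q^k`, the function
`h2(x) = ((x^{d+1} − 1)/(x^d − 1))^d·(q^k − q) − (x^d − 1)/(x − 1) + (q − 1)·x^d`
has exactly one root in `(1, ∞)`. -/
theorem stmt7 (q k d : ℕ) (hq : 4 ≤ q) (hk : 2 ≤ k) (hd : 3 * q ^ k ≤ d) :
    ∃! x : ℝ, 1 < x ∧
      ((x ^ (d + 1) - 1) / (x ^ d - 1)) ^ d * ((q : ℝ) ^ k - q)
        - (x ^ d - 1) / (x - 1) + ((q : ℝ) - 1) * x ^ d = 0 := by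
  have hq1 : (1 : ℝ) < q := by exact_mod_cast (by omega : 1 < q)
  exact stmt7_general (sub_nonneg.2 (le_self_pow₀ hq1.le (by omega))) (sub_pos.2 hq1)
    (one_add_inv_pow_mul_sub_add_lt hq1.le (by omega) (by exact_mod_cast hd))
end

section
/- Let q ≥ 4 be an even integer, k ≥ 2 an integer, and d = 5q^k. Set y_E := 1 + 1/(2(q^k − q − 1)). Then: (a) there exists a real x_E > 1 + 1/(q^k − q − 1) with f2(x_E, y_E) = 0; and (b) y_E < x**, where x** is the unique root in (1, ∞) of h2(x) := ((x^{d+1} − 1)/(x^d − 1))^d·(q^k − q) − (x^d − 1)/(x − 1) + (q − 1)·x^d. -/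
/-- `h2(x) = ((x^{d+1} − 1)/(x^d − 1))^d·(q^k − q) − (x^d − 1)/(x − 1) + (q − 1)·x^d`. -/
noncomputable def h2 (q k d : ℕ) (x : ℝ) : ℝ :=
  ((x ^ (d + 1) - 1) / (x ^ d - 1)) ^ d * ((q : ℝ) ^ k - q)
    - (x ^ d - 1) / (x - 1) + ((q : ℝ) - 1) * x ^ d

/-- `f2(x,y) = (y−1)·[(1 + y^d(x−1)/(y^d−1))^d·(q^k−q) + (q−1)·x^d] − x^d + 1`. -/
noncomputable def f2 (q k d : ℕ) (x y : ℝ) : ℝ :=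
  (y - 1) * ((1 + y ^ d * (x - 1) / (y ^ d - 1)) ^ d * ((q : ℝ) ^ k - q)
    + ((q : ℝ) - 1) * x ^ d) - x ^ d + 1

/-!
On the diagonal `f2(x, x) = (x - 1) * h2(x)`, so (b) says that `f2` has no zero `(x, x)` with
`1 < x ≤ y_E`. Everything rests on the factorisation
`1 + Y (x - 1) / (Y - 1) = x * (1 + (1 - 1/x) / (Y - 1))` with `Y = y^d`, whose `d`-th power is at
most `x^d * exp (s / (Y - 1))` for `s = d (1 - 1/x)`, and on `exp s ≤ x^d`.

For (a), these bounds make `f2(·, y_E)` negative at `1 + 1/(q^k - q - 1)`, while the leading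
coefficient in `x^d` is positive, so the intermediate value theorem applies. For (b), put
`g = s / (x^d - 1)`; negativity of `f2(x, x)` follows from `x * (s + g) * exp g < 5`. Since
`s / (exp s - 1)` stays below the line `1 - 2s/9` on `[0, 7/2]`, the tangent line inequality for
`exp` gives `(s + g) * exp g ≤ (7/2) * exp (2/7)`, which suffices because `x ≤ 23/22`.
-/

/-- The function `f2` with its coefficients `q^k - q` and `q - 1` replaced by real parameters
`a` and `b`; thus `q^k` becomes `a + b + 1`, and `q^k - q - 1` becomes `a - 1`. -/
noncomputable def f2Real (a b : ℝ) (d : ℕ) (x y : ℝ) : ℝ :=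
  (y - 1) * ((1 + y ^ d * (x - 1) / (y ^ d - 1)) ^ d * a + b * x ^ d) - x ^ d + 1

section

open Real Filter Topology

lemma exp_five_ge : 148 ≤ exp 5 :=
  calc (148 : ℝ) ≤ 2.7182 ^ 5 := by norm_num
    _ ≤ exp 1 ^ 5 := by gcongr; linarith [exp_one_gt_d9]
    _ = exp 5 := by rw [← exp_nat_mul]; norm_num

lemma exp_four_le : exp 4 ≤ 55 :=
  calc exp 4 = exp 1 ^ 4 := by rw [← exp_nat_mul]; norm_num
    _ ≤ 2.7183 ^ 4 := by gcongr; linarith [exp_one_lt_d9]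
    _ ≤ 55 := by norm_num

lemma exp_nine_div_twenty_le : exp (9 / 20) ≤ 1.57 := by
  refine (exp_bound' (by norm_num) (by norm_num) (n := 5) (by norm_num)).trans ?_
  norm_num [Finset.sum_range_succ, Nat.factorial]

lemma exp_two_div_seven_le : exp (2 / 7) ≤ 4 / 3 := by
  refine (exp_bound' (by norm_num) (by norm_num) (n := 4) (by norm_num)).trans ?_
  norm_num [Finset.sum_range_succ, Nat.factorial]

lemma two_mul_le_exp_sub_one {s : ℝ} (hs : 5 / 2 ≤ s) : 2 * s ≤ 9 / 20 * (exp s - 1) := by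
  have exp_base : 12.15 ≤ exp (5 / 2) := by
    refine le_of_pow_le_pow_left₀ two_ne_zero (exp_pos _).le ?_
    calc (12.15 : ℝ) ^ 2 ≤ 148 := by norm_num
      _ ≤ exp 5 := exp_five_ge
      _ = exp (5 / 2) ^ 2 := by rw [← exp_nat_mul]; norm_num
  have exp_ge : 12.15 * (s - 5 / 2 + 1) ≤ exp s :=
    calc 12.15 * (s - 5 / 2 + 1) ≤ exp (5 / 2) * exp (s - 5 / 2) := by
          gcongr
          exact add_one_le_exp _
      _ = exp s := by rw [← exp_add]; ring_nf
  linarith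

lemma le_one_sub_mul_exp_sub_one {s : ℝ} (hs : 0 ≤ s) (hs' : s ≤ 7 / 2) :
    s ≤ (1 - 2 / 9 * s) * (exp s - 1) := by
  have exp_cubic : s + s ^ 2 / 2 + s ^ 3 / 6 ≤ exp s - 1 := by
    have := sum_le_exp_of_nonneg hs 4
    norm_num [Finset.sum_range_succ, Nat.factorial] at this
    linarith
  have poly_nonneg : 0 ≤ s ^ 2 * (15 + 3 * s - 2 * s ^ 2) :=
    mul_nonneg (sq_nonneg s) (by nlinarith)
  calc s ≤ (1 - 2 / 9 * s) * (s + s ^ 2 / 2 + s ^ 3 / 6) := by linarith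
    _ ≤ (1 - 2 / 9 * s) * (exp s - 1) := by gcongr; linarith

lemma add_mul_exp_le {s g : ℝ} (h : g ≤ 1 - 2 / 9 * s) :
    (s + g) * exp g ≤ 7 / 2 * exp (2 / 7) := by
  have tangent : s + g ≤ 7 / 2 * exp (2 / 7 * (s + g) - 1) := by
    linarith [add_one_le_exp (2 / 7 * (s + g) - 1)]
  calc (s + g) * exp g ≤ 7 / 2 * exp (2 / 7 * (s + g) - 1) * exp g := by gcongr
    _ = 7 / 2 * exp (2 / 7 * (s + g) - 1 + g) := by rw [mul_assoc, ← exp_add]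
    _ ≤ 7 / 2 * exp (2 / 7) := by gcongr; linarith

lemma exp_mul_one_sub_inv_le_pow {x : ℝ} (hx : 0 < x) (n : ℕ) :
    exp (n * (1 - x⁻¹)) ≤ x ^ n := by
  rw [exp_nat_mul]
  gcongr
  exact (le_log_iff_exp_le hx).1 (one_sub_inv_le_log_of_pos hx)

lemma pow_le_exp_mul_sub_one {x : ℝ} (hx : 0 ≤ x) (n : ℕ) : x ^ n ≤ exp (n * (x - 1)) := by
  rw [exp_nat_mul]
  gcongr
  linarith [add_one_le_exp (x - 1)]

lemma one_sub_inv_one_add_one_div {t : ℝ} (ht : 0 < t) : 1 - (1 + 1 / t)⁻¹ = 1 / (t + 1) := by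
  field_simp
  ring

lemma exp_div_add_one_le_one_add_one_div_pow {t : ℝ} (ht : 0 < t) (n : ℕ) :
    exp (n / (t + 1)) ≤ (1 + 1 / t) ^ n := by
  rw [← mul_one_div, ← one_sub_inv_one_add_one_div ht]
  exact exp_mul_one_sub_inv_le_pow (by positivity) n

lemma mul_one_sub_inv_nonneg {x : ℝ} (hx : 1 ≤ x) (n : ℕ) : 0 ≤ n * (1 - x⁻¹) :=
  mul_nonneg n.cast_nonneg (sub_nonneg.2 (inv_le_one_of_one_le₀ hx))

lemma one_add_mul_div_pow_le {x Y : ℝ} (hx : 1 ≤ x) (hY : 1 < Y) (n : ℕ) :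
    (1 + Y * (x - 1) / (Y - 1)) ^ n ≤ x ^ n * exp (n * (1 - x⁻¹) / (Y - 1)) := by
  have hY' : 0 < Y - 1 := sub_pos.2 hY
  have hx' : 0 ≤ 1 - x⁻¹ := sub_nonneg.2 (inv_le_one_of_one_le₀ hx)
  have factor : 1 + Y * (x - 1) / (Y - 1) = x * (1 + (1 - x⁻¹) / (Y - 1)) := by
    field_simp
    ring
  calc (1 + Y * (x - 1) / (Y - 1)) ^ n = x ^ n * (1 + (1 - x⁻¹) / (Y - 1)) ^ n := by
        rw [factor, mul_pow]
    _ ≤ x ^ n * exp (n * (1 + (1 - x⁻¹) / (Y - 1) - 1)) := by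
        gcongr
        exact pow_le_exp_mul_sub_one (by positivity) n
    _ = x ^ n * exp (n * (1 - x⁻¹) / (Y - 1)) := by ring_nf

lemma two_le_div_sub_one_pow {Y : ℝ} {n : ℕ} (hY : 1 < Y) (hYn : Y ≤ n + 1) :
    2 ≤ (Y / (Y - 1)) ^ n := by
  have hY' : 0 < Y - 1 := sub_pos.2 hY
  calc (2 : ℝ) ≤ 1 + n * (1 / (Y - 1)) := by
        have : 1 ≤ n / (Y - 1) := (one_le_div hY').2 (by linarith)
        rw [mul_one_div]
        linarith
    _ ≤ (1 + 1 / (Y - 1)) ^ n := one_add_mul_le_pow (by linarith [one_div_pos.2 hY']) n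
    _ = (Y / (Y - 1)) ^ n := by
        congr 1
        field_simp
        ring

lemma continuous_f2Real (a b : ℝ) (d : ℕ) (y : ℝ) : Continuous fun x ↦ f2Real a b d x y := by
  unfold f2Real
  fun_prop

variable {a b : ℝ} {d : ℕ}

lemma tendsto_f2Real_atTop {y : ℝ} (hd : d ≠ 0)
    (hy : 1 < (y - 1) * ((y ^ d / (y ^ d - 1)) ^ d * a + b)) :
    Tendsto (fun x ↦ f2Real a b d x y) atTop atTop := by
  set W := y ^ d / (y ^ d - 1)
  have ratio_lim : Tendsto (fun x : ℝ ↦ (1 - W) * x⁻¹ + W) atTop (𝓝 W) := by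
    simpa using (tendsto_inv_atTop_zero.const_mul (1 - W)).add_const W
  have coeff_lim : Tendsto (fun x : ℝ ↦ (y - 1) * (((1 - W) * x⁻¹ + W) ^ d * a + b) - 1) atTop
      (𝓝 ((y - 1) * (W ^ d * a + b) - 1)) :=
    ((((ratio_lim.pow d).mul_const a).add_const b).const_mul (y - 1)).sub_const 1
  have main := tendsto_atTop_add_const_right atTop 1
    ((tendsto_pow_atTop hd).atTop_mul_pos (sub_pos.2 hy) coeff_lim)
  refine main.congr' ?_
  filter_upwards [eventually_gt_atTop 0] with x hx
  have base : 1 + y ^ d * (x - 1) / (y ^ d - 1) = x * ((1 - W) * x⁻¹ + W) := by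
    rw [mul_div_right_comm]
    field_simp
    ring
  rw [f2Real, base, mul_pow]
  ring

lemma one_add_mul_div_pow_le_mul_of_exp_le {Y : ℝ} (ha : 1 < a) (hd : 5 ≤ d / a)
    (hY : exp (d / a / 2) ≤ Y) :
    (1 + Y * (1 + 1 / (a - 1) - 1) / (Y - 1)) ^ d ≤ (1 + 1 / (a - 1)) ^ d * 1.57 := by
  have ha' : 0 < a - 1 := sub_pos.2 ha
  have hY_one : 1 < Y := (one_lt_exp_iff.2 (by linarith)).trans_le hY
  have exponent_le : d * (1 - (1 + 1 / (a - 1))⁻¹) / (Y - 1) ≤ 9 / 20 := by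
    rw [one_sub_inv_one_add_one_div ha', sub_add_cancel, mul_one_div,
      div_le_iff₀ (sub_pos.2 hY_one)]
    linarith [two_mul_le_exp_sub_one (s := d / a / 2) (by linarith)]
  refine (one_add_mul_div_pow_le (le_add_of_nonneg_right (by positivity)) hY_one d).trans ?_
  gcongr
  exact (exp_le_exp.2 exponent_le).trans exp_nine_div_twenty_le

lemma f2Real_one_add_one_div_neg (ha : 12 ≤ a) (hb : 0 ≤ b) (hab : 11 * b ≤ 3 * (a - 1))
    (hd : (d : ℝ) = 5 * (a + b + 1)) :
    f2Real a b d (1 + 1 / (a - 1)) (1 + 1 / (2 * (a - 1))) < 0 := by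
  have ha' : 0 < a - 1 := by linarith
  have five_le : 5 ≤ d / a := (le_div_iff₀ (by linarith)).2 (by linarith)
  have exp_le_xpow := exp_div_add_one_le_one_add_one_div_pow ha' d
  rw [sub_add_cancel] at exp_le_xpow
  set x := 1 + 1 / (a - 1)
  set y := 1 + 1 / (2 * (a - 1)) with hy
  have xpow_ge : 148 ≤ x ^ d := exp_five_ge.trans ((exp_le_exp.2 five_le).trans exp_le_xpow)
  have ypow_ge : exp (d / a / 2) ≤ y ^ d := by
    refine le_trans ?_ (exp_div_add_one_le_one_add_one_div_pow (mul_pos two_pos ha') d)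
    rw [div_div]
    gcongr
    linarith
  have base_pow_le : (1 + y ^ d * (x - 1) / (y ^ d - 1)) ^ d ≤ x ^ d * 1.57 :=
    one_add_mul_div_pow_le_mul_of_exp_le (by linarith) five_le ypow_ge
  calc f2Real a b d x y
      ≤ (y - 1) * (x ^ d * 1.57 * a + b * x ^ d) - x ^ d + 1 := by
        have : 0 ≤ y - 1 := by rw [hy, add_sub_cancel_left]; positivity
        unfold f2Real
        gcongr
    _ = (2 * (a - 1) - (2 * (a - 1) - 1.57 * a - b) * x ^ d) / (2 * (a - 1)) := by
        rw [hy]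
        field_simp
        ring
    _ < 0 := by
        refine div_neg_of_neg_of_pos ?_ (by positivity)
        have := mul_le_mul_of_nonneg_left xpow_ge
          (show 0 ≤ 2 * (a - 1) - 1.57 * a - b by linarith)
        linarith

lemma tendsto_f2Real_one_add_one_div_atTop (ha : 12 ≤ a) (hb : 0 ≤ b) (hab : 11 * b ≤ 3 * (a - 1))
    (hd : (d : ℝ) = 5 * (a + b + 1)) :
    Tendsto (fun x ↦ f2Real a b d x (1 + 1 / (2 * (a - 1)))) atTop atTop := by
  have : 0 < a - 1 := by linarith
  have hd0 : d ≠ 0 := ((Nat.cast_pos (α := ℝ)).1 (by linarith)).ne'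
  set y := 1 + 1 / (2 * (a - 1))
  have hy_sub : y - 1 = 1 / (2 * (a - 1)) := add_sub_cancel_left ..
  have ypow_gt_one : 1 < y ^ d := one_lt_pow₀ (lt_add_of_pos_right 1 (by positivity)) hd0
  have ypow_le : y ^ d ≤ d + 1 :=
    calc y ^ d ≤ exp (d * (y - 1)) := pow_le_exp_mul_sub_one (by positivity) d
      _ ≤ exp 4 := by
        gcongr
        rw [hy_sub, mul_one_div, div_le_iff₀ (by positivity)]
        linarith
      _ ≤ 55 := exp_four_le
      _ ≤ d + 1 := by linarith
  refine tendsto_f2Real_atTop hd0 ?_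
  calc 1 < (y - 1) * (2 * a + b) := by
        rw [hy_sub, one_div_mul_eq_div, one_lt_div (by positivity)]
        linarith
    _ ≤ (y - 1) * ((y ^ d / (y ^ d - 1)) ^ d * a + b) := by
        have : 0 ≤ y - 1 := by rw [hy_sub]; positivity
        gcongr
        exact two_le_div_sub_one_pow ypow_gt_one ypow_le

lemma mul_pow_mul_exp_lt_five_mul_pow_sub_one {x : ℝ} (hd : d ≠ 0) (hx : 1 < x) (hx' : x ≤ 23 / 22)
    (hs : d * (1 - x⁻¹) ≤ 7 / 2) :
    d * (x - 1) * (x ^ d * exp (d * (1 - x⁻¹) / (x ^ d - 1))) < 5 * (x ^ d - 1) := by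
  have hP : 0 < x ^ d - 1 := sub_pos.2 (one_lt_pow₀ hx hd)
  have hs0 : 0 ≤ d * (1 - x⁻¹) := mul_one_sub_inv_nonneg hx.le d
  have s_mul : d * (1 - x⁻¹) * x = d * (x - 1) := by field_simp
  have exp_s_le : exp (d * (1 - x⁻¹)) ≤ x ^ d := exp_mul_one_sub_inv_le_pow (by linarith) d
  set s := d * (1 - x⁻¹)
  set g := s / (x ^ d - 1) with hg
  have g_le : g ≤ 1 - 2 / 9 * s := by
    rw [hg, div_le_iff₀ hP]
    refine (le_one_sub_mul_exp_sub_one hs0 hs).trans ?_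
    gcongr
    linarith
  have key : x * ((s + g) * exp g) < 5 :=
    calc x * ((s + g) * exp g) ≤ 23 / 22 * (7 / 2 * (4 / 3)) := by
          refine mul_le_mul hx' ((add_mul_exp_le g_le).trans ?_) (by positivity) (by norm_num)
          gcongr
          exact exp_two_div_seven_le
      _ < 5 := by norm_num
  calc d * (x - 1) * (x ^ d * exp g) = x * ((s + g) * exp g) * (x ^ d - 1) := by
        rw [← s_mul, hg]
        field_simp
        ring
    _ < 5 * (x ^ d - 1) := by gcongr

lemma f2Real_self_neg (ha : 12 ≤ a) (hb : 0 ≤ b) (hab : 11 * b ≤ 3 * (a - 1))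
    (hd : (d : ℝ) = 5 * (a + b + 1)) {x : ℝ} (hx : 1 < x) (hx' : x ≤ 1 + 1 / (2 * (a - 1))) :
    f2Real a b d x x < 0 := by
  have hd0 : d ≠ 0 := ((Nat.cast_pos (α := ℝ)).1 (by linarith)).ne'
  have hx_mul : (x - 1) * (2 * (a - 1)) ≤ 1 := by
    rw [← le_div_iff₀ (by linarith)]
    linarith
  have hs : d * (1 - x⁻¹) ≤ 7 / 2 := by
    have : d * (1 - x⁻¹) = d * (x - 1) / x := by field_simp
    rw [this, div_le_iff₀ (by linarith)]
    nlinarith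
  have growth := mul_pow_mul_exp_lt_five_mul_pow_sub_one hd0 hx (by nlinarith) hs
  have hP : 1 < x ^ d := one_lt_pow₀ hx hd0
  have : 0 < x - 1 := sub_pos.2 hx
  have hg : 0 ≤ d * (1 - x⁻¹) / (x ^ d - 1) :=
    div_nonneg (mul_one_sub_inv_nonneg hx.le d) (sub_pos.2 hP).le
  set E := x ^ d * exp (d * (1 - x⁻¹) / (x ^ d - 1))
  calc f2Real a b d x x ≤ (x - 1) * (E * a + b * E) - x ^ d + 1 := by
        unfold f2Real
        gcongr
        · exact one_add_mul_div_pow_le hx.le hP d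
        · exact le_mul_of_one_le_right (by positivity) (one_le_exp hg)
    _ = d * (x - 1) * E / 5 - (x - 1) * E - (x ^ d - 1) := by
        rw [hd]
        ring
    _ < 0 := by
        linarith [show 0 < (x - 1) * E by positivity]

end

lemma f2Real_self_eq_mul_h2 (q k : ℕ) {d : ℕ} (hd : d ≠ 0) {x : ℝ} (hx : 1 < x) :
    f2Real ((q : ℝ) ^ k - q) (q - 1) d x x = (x - 1) * h2 q k d x := by
  have : x - 1 ≠ 0 := (sub_pos.2 hx).ne'
  have hpow_sub : x ^ d - 1 ≠ 0 := (sub_pos.2 (one_lt_pow₀ hx hd)).ne'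
  have base : 1 + x ^ d * (x - 1) / (x ^ d - 1) = (x ^ (d + 1) - 1) / (x ^ d - 1) := by
    field_simp
    ring
  rw [f2Real, h2, base]
  field_simp
  ring

-- Both bounds are equalities at `q = 4`, `k = 2`.
lemma pow_sub_bounds {q : ℝ} {k : ℕ} (hq : 4 ≤ q) (hk : 2 ≤ k) :
    12 ≤ q ^ k - q ∧ 11 * (q - 1) ≤ 3 * (q ^ k - q - 1) := by
  have : q ^ 2 ≤ q ^ k := pow_le_pow_right₀ (by linarith) hk
  constructor <;> nlinarith

theorem stmt15_general {a b : ℝ} {d : ℕ} (ha : 12 ≤ a) (hb : 0 ≤ b)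
    (hab : 11 * b ≤ 3 * (a - 1)) (hd : (d : ℝ) = 5 * (a + b + 1)) :
    (∃ xE : ℝ, 1 + 1 / (a - 1) < xE ∧ f2Real a b d xE (1 + 1 / (2 * (a - 1))) = 0) ∧
    (∀ x : ℝ, 1 < x → f2Real a b d x x = 0 → 1 + 1 / (2 * (a - 1)) < x) := by
  refine ⟨?_, fun x hx hzero ↦ ?_⟩
  · have hneg := f2Real_one_add_one_div_neg ha hb hab hd
    obtain ⟨xE, hxE, hzero⟩ := isPreconnected_Ici.intermediate_value_Ici Set.self_mem_Ici
      (Filter.le_principal_iff.2 (Filter.Ici_mem_atTop _)) (continuous_f2Real ..).continuousOn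
      (tendsto_f2Real_one_add_one_div_atTop ha hb hab hd) hneg.le
    refine ⟨xE, lt_of_le_of_ne hxE ?_, hzero⟩
    rintro rfl
    exact hneg.ne hzero
  · by_contra! hle
    exact (f2Real_self_neg ha hb hab hd hx hle).ne hzero

/-- Let `q ≥ 4` be an even integer, `k ≥ 2` an integer, `d = 5q^k`, and
`y_E = 1 + 1/(2(q^k − q − 1))`. Then (a) there exists `x_E > 1 + 1/(q^k − q − 1)` with
`f2(x_E, y_E) = 0`, and (b) `y_E < x**` for the root `x**` of `h2` in `(1, ∞)`. -/
theorem stmt15 (q k d : ℕ) (hq : 4 ≤ q) (heven : Even q) (hk : 2 ≤ k)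
    (hd : d = 5 * q ^ k) :
    (∃ xE : ℝ, 1 + 1 / ((q : ℝ) ^ k - q - 1) < xE ∧
      f2 q k d xE (1 + 1 / (2 * ((q : ℝ) ^ k - q - 1))) = 0) ∧
    (∀ xss : ℝ, 1 < xss → h2 q k d xss = 0 →
      1 + 1 / (2 * ((q : ℝ) ^ k - q - 1)) < xss) := by
  have hq' : (4 : ℝ) ≤ q := by exact_mod_cast hq
  obtain ⟨ha, hab⟩ := pow_sub_bounds hq' hk
  have hd' : (d : ℝ) = 5 * ((q : ℝ) ^ k - q + (q - 1) + 1) := by rw [hd]; push_cast; ring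
  have hd0 : d ≠ 0 := by rw [hd]; positivity
  refine (stmt15_general ha (by linarith) hab hd').imp_right fun h x hx hzero ↦ h x hx ?_
  rw [f2Real_self_eq_mul_h2 q k hd0 hx, hzero, mul_zero]
end

section
/- Let q ≥ 4 be an even integer, k ≥ 2 an integer, and d = 5q^k. Then there exist reals x and y with x > y > 1 + 1/(2(q^k − q − 1)) such that f1(x, y) = 0 and f2(x, y) = 0. -/
/-- `f1(x,y) = (x−1)·[(1 + x^d(y−1)/(x^d−1))^d·(q^k−q) + q − y^d] − y^d + 1`. -/
noncomputable def f1 (q k d : ℕ) (x y : ℝ) : ℝ :=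
  (x - 1) * ((1 + x ^ d * (y - 1) / (x ^ d - 1)) ^ d * ((q : ℝ) ^ k - q)
    + (q : ℝ) - y ^ d) - y ^ d + 1

/-!
Write `N = q ^ k - q`. On the square with side `[1 + 3 / (5 * (N - 1)), 1 + 1 / (N - 1)]` the second
function is strictly increasing in `y` and changes sign between the bottom and the top edge, so its
zero set is the graph of a continuous function `Y`. On the diagonal the first function minus the
second is `-q * (s - 1) * (s ^ d - 1) < 0`, so the first function is negative at the last point
where the graph of `Y` meets the diagonal. It is positive on the right edge, hence vanishes on
the part of the graph in between, which lies strictly below the diagonal.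
-/

open Set

section CommonZero

variable {X β γ : Type*} [TopologicalSpace X]
  [ConditionallyCompleteLinearOrder β] [TopologicalSpace β] [OrderTopology β] [DenselyOrdered β]
  [LinearOrder γ] [TopologicalSpace γ] [OrderClosedTopology γ]

theorem exists_continuousOn_apply_eq {s : Set X} {a b : β} {c : γ} {g : X → β → γ} (hab : a ≤ b)
    (hg_left : ∀ y ∈ Icc a b, ContinuousOn (fun x => g x y) s)
    (hg_right : ∀ x ∈ s, ContinuousOn (g x) (Icc a b))
    (hmono : ∀ x ∈ s, StrictMonoOn (g x) (Icc a b))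
    (hga : ∀ x ∈ s, g x a < c) (hgb : ∀ x ∈ s, c < g x b) :
    ∃ Y : X → β, ContinuousOn Y s ∧ ∀ x ∈ s, Y x ∈ Ioo a b ∧ g x (Y x) = c := by
  have : Nonempty β := ⟨a⟩
  have hex : ∀ x ∈ s, ∃ y, y ∈ Ioo a b ∧ g x y = c := fun x hx =>
    intermediate_value_Ioo hab (hg_right x hx) ⟨hga x hx, hgb x hx⟩
  choose! Y hY hgY using hex
  have hYmem : ∀ x ∈ s, Y x ∈ Icc a b := fun x hx => Ioo_subset_Icc_self (hY x hx)
  refine ⟨Y, fun x₀ hx₀ => tendsto_order.2 ⟨fun l hl => ?_, fun u hu => ?_⟩,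
    fun x hx => ⟨hY x hx, hgY x hx⟩⟩
  · have hmem : max l a ∈ Icc a b :=
      ⟨le_max_right _ _, (max_lt hl (hY x₀ hx₀).1).le.trans (hY x₀ hx₀).2.le⟩
    have hlt : g x₀ (max l a) < c :=
      hgY x₀ hx₀ ▸ hmono x₀ hx₀ hmem (hYmem x₀ hx₀) (max_lt hl (hY x₀ hx₀).1)
    filter_upwards [(hg_left _ hmem x₀ hx₀).eventually_lt_const hlt, self_mem_nhdsWithin]
      with x hx hxs
    rw [← hgY x hxs, (hmono x hxs).lt_iff_lt hmem (hYmem x hxs)] at hx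
    exact (le_max_left _ _).trans_lt hx
  · have hmem : min u b ∈ Icc a b :=
      ⟨(hY x₀ hx₀).1.le.trans (lt_min hu (hY x₀ hx₀).2).le, min_le_right _ _⟩
    have hlt : c < g x₀ (min u b) :=
      hgY x₀ hx₀ ▸ hmono x₀ hx₀ (hYmem x₀ hx₀) hmem (lt_min hu (hY x₀ hx₀).2)
    filter_upwards [(hg_left _ hmem x₀ hx₀).eventually_const_lt hlt, self_mem_nhdsWithin]
      with x hx hxs
    rw [← hgY x hxs, (hmono x hxs).lt_iff_lt (hYmem x hxs) hmem] at hx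
    exact hx.trans_le (min_le_left _ _)

theorem exists_last_fixed_point {a b : β} {φ : β → β} (hab : a ≤ b)
    (hφ : ContinuousOn φ (Icc a b)) (ha : a ≤ φ a) (hb : φ b < b) :
    ∃ m ∈ Ico a b, φ m = m ∧ ∀ x ∈ Ioc m b, φ x < x := by
  have hclosed : IsClosed {x ∈ Icc a b | x ≤ φ x} := isClosed_Icc.isClosed_le continuousOn_id hφ
  obtain ⟨m, ⟨hm, hmφ⟩, hmax⟩ := (isCompact_Icc.of_isClosed_subset hclosed
    (sep_subset _ _)).exists_isGreatest ⟨a, left_mem_Icc.2 hab, ha⟩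
  have hmb : m < b := hm.2.lt_of_ne (by rintro rfl; exact hmφ.not_gt hb)
  have hsub : Icc m b ⊆ Icc a b := Icc_subset_Icc_left hm.1
  obtain ⟨z, hz, hzφ⟩ := isPreconnected_Icc.intermediate_value₂ (left_mem_Icc.2 hm.2)
    (right_mem_Icc.2 hm.2) continuousOn_id (hφ.mono hsub) hmφ hb.le
  have hzm : z = m := (hmax ⟨hsub hz, hzφ.le⟩).antisymm hz.1
  refine ⟨m, ⟨hm.1, hmb⟩, hzm ▸ hzφ.symm, fun x hx => ?_⟩
  by_contra! hxφ
  exact hx.1.not_ge (hmax ⟨hsub (Ioc_subset_Icc_self hx), hxφ⟩)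

theorem exists_lt_apply_eq_apply_eq {a b : β} {c : γ} {f g : β → β → γ} (hab : a ≤ b)
    (hf : ContinuousOn (fun p : β × β => f p.1 p.2) (Icc a b ×ˢ Icc a b))
    (hg : ContinuousOn (fun p : β × β => g p.1 p.2) (Icc a b ×ˢ Icc a b))
    (hmono : ∀ x ∈ Icc a b, StrictMonoOn (g x) (Icc a b))
    (hga : ∀ x ∈ Icc a b, g x a < c) (hgb : ∀ x ∈ Icc a b, c < g x b)
    (hfb : ∀ y ∈ Icc a b, c < f b y) (hfg : ∀ s ∈ Icc a b, f s s < g s s) :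
    ∃ x y, a < y ∧ y < x ∧ f x y = c ∧ g x y = c := by
  have ha : a ∈ Icc a b := left_mem_Icc.2 hab
  have hb : b ∈ Icc a b := right_mem_Icc.2 hab
  obtain ⟨Y, hYcont, hY⟩ := exists_continuousOn_apply_eq hab
    (fun y hy => hg.comp (f := fun x => (x, y)) (by fun_prop) fun x hx => ⟨hx, hy⟩)
    (fun x hx => hg.comp (f := fun y => (x, y)) (by fun_prop) fun y hy => ⟨hx, hy⟩)
    hmono hga hgb
  have hYmem : ∀ x ∈ Icc a b, Y x ∈ Icc a b := fun x hx => Ioo_subset_Icc_self (hY x hx).1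
  obtain ⟨m, hm, hYm, hlast⟩ :=
    exists_last_fixed_point hab hYcont (hY a ha).1.1.le (hY b hb).1.2
  have hmem : m ∈ Icc a b := Ico_subset_Icc_self hm
  have hsub : Icc m b ⊆ Icc a b := Icc_subset_Icc_left hm.1
  have hneg : f m (Y m) < c := by
    calc f m (Y m) = f m m := by rw [hYm]
      _ < g m m := hfg m hmem
      _ = g m (Y m) := by rw [hYm]
      _ = c := (hY m hmem).2
  have hcont : ContinuousOn (fun x => f x (Y x)) (Icc a b) :=
    hf.comp (f := fun x => (x, Y x)) (continuousOn_id.prodMk hYcont)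
      fun x hx => ⟨hx, hYmem x hx⟩
  obtain ⟨x, hx, hfx⟩ := intermediate_value_Ioo hm.2.le (hcont.mono hsub)
    ⟨hneg, hfb _ (hYmem b hb)⟩
  have hxab : x ∈ Icc a b := hsub (Ioo_subset_Icc_self hx)
  exact ⟨x, Y x, (hY x hxab).1.1, hlast x (Ioo_subset_Ioc_self hx), hfx, (hY x hxab).2⟩

end CommonZero

section Exponential

theorem twenty_le_exp_three : (20 : ℝ) ≤ Real.exp 3 := by
  calc (20 : ℝ) ≤ 2.7182818283 ^ 3 := by norm_num
    _ ≤ Real.exp 1 ^ 3 := by gcongr; exact Real.exp_one_gt_d9.le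
    _ = Real.exp 3 := by rw [← Real.exp_nat_mul]; norm_num

theorem twenty_mul_quadratic_le_exp {t : ℝ} (ht : 0 ≤ t) :
    20 * (1 + t + t ^ 2 / 2) ≤ Real.exp (3 + t) := by
  rw [Real.exp_add]
  gcongr
  · exact twenty_le_exp_three
  · exact Real.quadratic_le_exp_of_nonneg ht

theorem two_add_two_mul_sq_le_exp {w : ℝ} (hw : 3 ≤ w) : 2 + 2 * w ^ 2 ≤ Real.exp w := by
  have h := twenty_mul_quadratic_le_exp (sub_nonneg.2 hw)
  rw [add_sub_cancel] at h
  nlinarith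

theorem exp_mul_one_sub_inv_le_pow_s16 (d : ℕ) {y : ℝ} (hy : 0 < y) :
    Real.exp (d * (1 - y⁻¹)) ≤ y ^ d := by
  rw [Real.exp_nat_mul]
  gcongr
  exact (Real.le_log_iff_exp_le hy).1 (Real.one_sub_inv_le_log_of_pos hy)

theorem sq_mul_sub_one_mul_pow_pred_le {d : ℕ} {M y : ℝ} (hM : 3 ≤ M) (hd : 5 * M + 3 ≤ d)
    (hy : 3 ≤ 5 * M * (y - 1)) :
    (d : ℝ) ^ 2 * (y - 1) * y ^ (d - 1) ≤ M * (y ^ d - 1) ^ 2 := by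
  have hy₁ : 1 < y := by nlinarith
  have hy₀ : 0 < y := by linarith
  have hd₀ : d ≠ 0 := by rintro rfl; norm_num at hd; linarith
  set w : ℝ := d * (1 - y⁻¹) with hw
  have hwy : w * y = d * (y - 1) := by rw [hw]; field_simp
  have hw₃ : 3 ≤ w := by
    refine le_of_mul_le_mul_right ?_ hy₀
    rw [hwy]
    nlinarith
  have hd_le : (d : ℝ) ≤ 2 * M * w := by
    refine le_of_mul_le_mul_right ?_ hy₀
    calc (d : ℝ) * y ≤ d * (2 * M * (y - 1)) := by gcongr; nlinarith
      _ = 2 * M * w * y := by rw [mul_assoc _ w, hwy]; ring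
  have hpow : 2 + 2 * w ^ 2 ≤ y ^ d :=
    (two_add_two_mul_sq_le_exp hw₃).trans (exp_mul_one_sub_inv_le_pow_s16 d hy₀)
  calc (d : ℝ) ^ 2 * (y - 1) * y ^ (d - 1) = d * (d * (y - 1)) * y ^ (d - 1) := by ring
    _ = d * w * (y ^ (d - 1) * y) := by rw [← hwy]; ring
    _ = d * w * y ^ d := by rw [pow_sub_one_mul hd₀]
    _ ≤ 2 * M * w * w * y ^ d := by gcongr
    _ = M * (2 * w ^ 2 * y ^ d) := by ring
    _ ≤ M * (y ^ d - 1) ^ 2 := by gcongr; nlinarith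

-- The bound is a linear majorant of `5 * (1 + r) / (exp (3 * (1 + r)) - 1)` on `[0, 1 / 3]`.
theorem le_of_mul_exp_sub_one_le {a r z : ℝ} (hr₀ : 0 ≤ r) (hr : r ≤ 1 / 3) (ha : 1 + r ≤ a)
    (hz : z * (Real.exp (3 * a) - 1) ≤ 5 * a) : z ≤ 0.27 - 0.36 * r := by
  obtain ⟨t, rfl⟩ : ∃ t, a = 1 + t := ⟨a - 1, by ring⟩
  have ht : r ≤ t := by linarith
  have ht₀ : 0 ≤ t := hr₀.trans ht
  have hexp : 19 + 60 * t + 90 * t ^ 2 ≤ Real.exp (3 * (1 + t)) - 1 := by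
    have h := twenty_mul_quadratic_le_exp (mul_nonneg zero_le_three ht₀)
    rw [mul_one_add]
    linarith
  have hpoly : 5 * (1 + t) ≤ (0.27 - 0.36 * r) * (19 + 60 * t + 90 * t ^ 2) := by
    rcases le_total t (1 / 3) with ht₃ | ht₃
    · calc 5 * (1 + t) ≤ (0.27 - 0.36 * t) * (19 + 60 * t + 90 * t ^ 2) := by
            nlinarith [mul_nonneg ht₀ (sub_nonneg.2 ht₃),
              mul_nonneg (mul_self_nonneg t) (sub_nonneg.2 ht₃)]
        _ ≤ _ := by gcongr
    · calc 5 * (1 + t) ≤ (0.27 - 0.36 * (1 / 3)) * (19 + 60 * t + 90 * t ^ 2) := by nlinarith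
        _ ≤ _ := by gcongr
  have hpos : 0 < Real.exp (3 * (1 + t)) - 1 := by nlinarith
  refine le_of_mul_le_mul_right (hz.trans (hpoly.trans ?_)) hpos
  gcongr
  linarith

theorem exp_add_le_of_le {r z : ℝ} (hr₀ : 0 ≤ r) (hr : r ≤ 1 / 3) (hz₀ : 0 ≤ z)
    (hz : z ≤ 0.27 - 0.36 * r) : Real.exp z + r ≤ 1.51 := by
  have hexp : Real.exp z ≤ 1 + z + z ^ 2 := by
    have h := Real.abs_exp_sub_one_sub_id_le (x := z) (by rw [abs_of_nonneg hz₀]; linarith)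
    linarith [(abs_le.1 h).2]
  nlinarith

end Exponential

section Ratio

variable {d : ℕ} {u v : ℝ}

/-- The factor `1 + u ^ d * (v - 1) / (u ^ d - 1)` whose `d`-th power occurs in both equations,
with `(u, v) = (x, y)` in `f1` and `(u, v) = (y, x)` in `f2`. -/
noncomputable def ratio (d : ℕ) (u v : ℝ) : ℝ := 1 + u ^ d * (v - 1) / (u ^ d - 1)

theorem ratio_eq (hu : u ^ d ≠ 1) (hv : v ≠ 0) :
    ratio d u v = v * (1 + (1 - v⁻¹) / (u ^ d - 1)) := by
  have : u ^ d - 1 ≠ 0 := sub_ne_zero.2 hu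
  rw [ratio]
  field_simp
  ring

theorem le_ratio (hu : 1 < u ^ d) (hv : 1 ≤ v) : v ≤ ratio d u v := by
  rw [ratio_eq hu.ne' (by positivity)]
  refine le_mul_of_one_le_right (by positivity) (le_add_of_nonneg_right ?_)
  exact div_nonneg (sub_nonneg.2 (inv_le_one_of_one_le₀ hv)) (sub_nonneg.2 hu.le)

theorem ratio_pow_le (hu : 1 < u ^ d) (hv : 1 ≤ v) :
    ratio d u v ^ d ≤ v ^ d * Real.exp (d * ((1 - v⁻¹) / (u ^ d - 1))) := by
  have hratio : 0 ≤ ratio d u v := by linarith [le_ratio hu hv]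
  rw [Real.exp_nat_mul, ← mul_pow]
  refine pow_le_pow_left₀ hratio ?_ d
  rw [ratio_eq hu.ne' (by positivity), add_comm 1]
  gcongr
  exact Real.add_one_le_exp _

theorem hasDerivAt_ratio (hu : u ^ d ≠ 1) :
    HasDerivAt (fun u => ratio d u v) (-((v - 1) * (d * u ^ (d - 1)) / (u ^ d - 1) ^ 2)) u := by
  have hpow := hasDerivAt_pow d u
  refine (((hpow.mul_const (v - 1)).div (hpow.sub_const 1) (sub_ne_zero.2 hu)).const_add
    1).congr_deriv ?_
  ring

theorem strictMonoOn_sub_one_mul_ratio_pow {M : ℝ} (hM : 3 ≤ M) (hd : 5 * M + 3 ≤ d)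
    (hv : 1 < v) (hvM : M * (v - 1) ≤ 1) :
    StrictMonoOn (fun u => (u - 1) * ratio d u v ^ d) (Ici (1 + 3 / (5 * M))) := by
  have hd₀ : d ≠ 0 := by rintro rfl; norm_num at hd; linarith
  have hbound : ∀ u ∈ Ici (1 + 3 / (5 * M)), 3 ≤ 5 * M * (u - 1) := fun u hu => by
    have h := le_sub_iff_add_le'.2 (mem_Ici.1 hu)
    rwa [div_le_iff₀' (by positivity)] at h
  have hpow : ∀ u ∈ Ici (1 + 3 / (5 * M)), 1 < u ^ d := fun u hu =>
    one_lt_pow₀ (by nlinarith [hbound u hu]) hd₀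
  have hderiv : ∀ u ∈ Ici (1 + 3 / (5 * M)), HasDerivAt (fun u => (u - 1) * ratio d u v ^ d)
      (ratio d u v ^ (d - 1) *
        (ratio d u v - (v - 1) * (d ^ 2 * (u - 1) * u ^ (d - 1)) / (u ^ d - 1) ^ 2)) u := by
    intro u hu
    refine (((hasDerivAt_id u).sub_const 1).mul
      ((hasDerivAt_ratio (v := v) (hpow u hu).ne').fun_pow d)).congr_deriv ?_
    rw [← pow_sub_one_mul hd₀ (ratio d u v)]
    simp only [id]
    ring
  refine strictMonoOn_of_deriv_pos (convex_Ici _)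
    (fun u hu => (hderiv u hu).continuousAt.continuousWithinAt) fun u hu => ?_
  replace hu := interior_subset hu
  have hv_le : v ≤ ratio d u v := le_ratio (hpow u hu) hv.le
  rw [(hderiv u hu).deriv]
  refine mul_pos (pow_pos (by linarith) _) (sub_pos.2 ?_)
  calc (v - 1) * (d ^ 2 * (u - 1) * u ^ (d - 1)) / (u ^ d - 1) ^ 2
      ≤ (v - 1) * (M * (u ^ d - 1) ^ 2) / (u ^ d - 1) ^ 2 := by
        gcongr ?_ / _
        exact mul_le_mul_of_nonneg_left (sq_mul_sub_one_mul_pow_pred_le hM hd (hbound u hu))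
          (by linarith)
    _ = M * (v - 1) := by
        have : u ^ d - 1 ≠ 0 := sub_ne_zero.2 (hpow u hu).ne'
        field_simp
    _ < ratio d u v := by linarith

end Ratio

section Equations

variable {N q x y : ℝ} {d : ℕ}

/-- The function `f1` with `q ^ k - q` replaced by a real parameter `N` and `q` real. -/
noncomputable def firstEqn (N q : ℝ) (d : ℕ) (x y : ℝ) : ℝ :=
  (x - 1) * (ratio d x y ^ d * N + q - y ^ d) - y ^ d + 1

/-- The function `f2` with `q ^ k - q` replaced by a real parameter `N` and `q` real. -/
noncomputable def secondEqn (N q : ℝ) (d : ℕ) (x y : ℝ) : ℝ :=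
  (y - 1) * (ratio d y x ^ d * N + (q - 1) * x ^ d) - x ^ d + 1

theorem continuousOn_firstEqn (hd : d ≠ 0) :
    ContinuousOn (fun p : ℝ × ℝ => firstEqn N q d p.1 p.2) (Ioi 1 ×ˢ Ioi 1) := by
  have h : ∀ p ∈ Ioi (1 : ℝ) ×ˢ Ioi (1 : ℝ), p.1 ^ d - 1 ≠ 0 := fun p hp =>
    (sub_pos.2 (one_lt_pow₀ hp.1 hd)).ne'
  unfold firstEqn ratio
  fun_prop (disch := assumption)

theorem continuousOn_secondEqn (hd : d ≠ 0) :
    ContinuousOn (fun p : ℝ × ℝ => secondEqn N q d p.1 p.2) (Ioi 1 ×ˢ Ioi 1) := by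
  have h : ∀ p ∈ Ioi (1 : ℝ) ×ˢ Ioi (1 : ℝ), p.2 ^ d - 1 ≠ 0 := fun p hp =>
    (sub_pos.2 (one_lt_pow₀ hp.2 hd)).ne'
  unfold secondEqn ratio
  fun_prop (disch := assumption)

theorem firstEqn_diag_lt_secondEqn_diag (hq : 0 < q) (hd : d ≠ 0) (hx : 1 < x) :
    firstEqn N q d x x < secondEqn N q d x x := by
  have hdiff : secondEqn N q d x x - firstEqn N q d x x = q * (x - 1) * (x ^ d - 1) := by
    unfold firstEqn secondEqn
    ring
  have : 0 < x ^ d - 1 := sub_pos.2 (one_lt_pow₀ hx hd)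
  have : 0 < x - 1 := sub_pos.2 hx
  rw [← sub_pos, hdiff]
  positivity

theorem firstEqn_pos (hN : 0 ≤ N) (hq : 0 ≤ q) (hd : d ≠ 0) (hx : 1 < x) (hy : 1 < y)
    (hNx : 1 ≤ (N - 1) * (x - 1)) : 0 < firstEqn N q d x y := by
  have hratio : y ^ d ≤ ratio d x y ^ d :=
    pow_le_pow_left₀ (by linarith) (le_ratio (one_lt_pow₀ hx hd) hy.le) d
  have hx₀ : 0 ≤ x - 1 := by linarith
  calc 0 < (N - 1) * (x - 1) * y ^ d + (x - 1) * q - y ^ d + 1 := by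
        nlinarith [pow_pos (zero_lt_one.trans hy) d, mul_nonneg hx₀ hq]
    _ = (x - 1) * (y ^ d * N + q - y ^ d) - y ^ d + 1 := by ring
    _ ≤ firstEqn N q d x y := by unfold firstEqn; gcongr

theorem secondEqn_pos (hN : 0 ≤ N) (hq : 0 ≤ q) (hd : d ≠ 0) (hx : 1 < x) (hy : 1 < y)
    (hNy : 1 ≤ (N - 1) * (y - 1)) : 0 < secondEqn N q d x y := by
  have hratio : x ^ d ≤ ratio d y x ^ d :=
    pow_le_pow_left₀ (by linarith) (le_ratio (one_lt_pow₀ hy hd) hx.le) d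
  have hy₀ : 0 ≤ y - 1 := by linarith
  have hxd : 0 < x ^ d := by positivity
  calc 0 < (N - 1) * (y - 1) * x ^ d + (y - 1) * q * x ^ d - x ^ d + 1 := by
        nlinarith [mul_nonneg (mul_nonneg hy₀ hq) hxd.le]
    _ = (y - 1) * (x ^ d * N + (q - 1) * x ^ d) - x ^ d + 1 := by ring
    _ ≤ secondEqn N q d x y := by unfold secondEqn; gcongr

theorem strictMonoOn_secondEqn (hN : 4 ≤ N) (hq : 1 ≤ q) (hd : 5 * (N - 1) + 3 ≤ d)
    (hx : 1 < x) (hNx : (N - 1) * (x - 1) ≤ 1) :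
    StrictMonoOn (secondEqn N q d x) (Ici (1 + 3 / (5 * (N - 1)))) := by
  intro u hu v hv huv
  have hratio : (u - 1) * ratio d u x ^ d * N < (v - 1) * ratio d v x ^ d * N :=
    mul_lt_mul_of_pos_right
      (strictMonoOn_sub_one_mul_ratio_pow (by linarith) hd hx hNx hu hv huv) (by linarith)
  have hlin : (u - 1) * ((q - 1) * x ^ d) ≤ (v - 1) * ((q - 1) * x ^ d) :=
    mul_le_mul_of_nonneg_right (by linarith)
      (mul_nonneg (by linarith) (pow_nonneg (by linarith) d))
  unfold secondEqn
  linarith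

theorem exp_div_le_pow (hN : 1 < N) (hy : 5 * (N - 1) * (y - 1) = 3) :
    Real.exp (3 * (d / (5 * N))) ≤ y ^ d := by
  have hy₀ : 0 < y := by nlinarith
  refine le_trans (Real.exp_le_exp.2 ?_) (exp_mul_one_sub_inv_le_pow_s16 d hy₀)
  have hrate : 3 / (5 * N) ≤ 1 - y⁻¹ := by
    rw [inv_eq_one_div, one_sub_div hy₀.ne', div_le_div_iff₀ (by positivity) hy₀]
    nlinarith
  calc 3 * (d / (5 * N)) = d * (3 / (5 * N)) := by ring
    _ ≤ d * (1 - y⁻¹) := by gcongr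

theorem exp_add_div_le (hN : 1 < N) (hq : 0 ≤ q) (hqN : 3 * q ≤ N) (hd : 5 * (N + q) ≤ d)
    (hx : 1 ≤ x) (hNx : (N - 1) * (x - 1) ≤ 1) (hy : 5 * (N - 1) * (y - 1) = 3) :
    Real.exp (d * ((1 - x⁻¹) / (y ^ d - 1))) + q / N ≤ 1.51 := by
  have hN₀ : 0 < N := by linarith
  have hr : q / N ≤ 1 / 3 := by rw [div_le_div_iff₀ hN₀ three_pos]; linarith
  have ha : 1 + q / N ≤ d / (5 * N) := by
    rw [le_div_iff₀ (by positivity)]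
    calc (1 + q / N) * (5 * N) = 5 * (N + q) := by field_simp
      _ ≤ d := hd
  have hr₀ : 0 ≤ q / N := by positivity
  have hexp : 1 < Real.exp (3 * (d / (5 * N))) := Real.one_lt_exp_iff.2 (by linarith)
  have hpow : Real.exp (3 * (d / (5 * N))) ≤ y ^ d := exp_div_le_pow hN hy
  have hx_inv₀ : 0 ≤ 1 - x⁻¹ := sub_nonneg.2 (inv_le_one_of_one_le₀ hx)
  have hx_inv : 1 - x⁻¹ ≤ 1 / N := by
    rw [inv_eq_one_div, one_sub_div (by positivity), div_le_div_iff₀ (by positivity) hN₀]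
    linarith
  have hpow₀ : 0 < y ^ d - 1 := by linarith
  have hz₀ : 0 ≤ d * ((1 - x⁻¹) / (y ^ d - 1)) := by positivity
  refine exp_add_le_of_le hr₀ hr hz₀ (le_of_mul_exp_sub_one_le hr₀ hr ha ?_)
  calc d * ((1 - x⁻¹) / (y ^ d - 1)) * (Real.exp (3 * (d / (5 * N))) - 1)
      ≤ d * ((1 - x⁻¹) / (y ^ d - 1)) * (y ^ d - 1) := by gcongr
    _ = d * (1 - x⁻¹) := by field_simp
    _ ≤ d * (1 / N) := by gcongr
    _ = 5 * (d / (5 * N)) := by ring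

theorem secondEqn_neg (hN : 10 ≤ N) (hq : 0 ≤ q) (hqN : 3 * q ≤ N) (hd : 5 * (N + q) ≤ d)
    (hyx : y ≤ x) (hNx : (N - 1) * (x - 1) ≤ 1) (hy : 5 * (N - 1) * (y - 1) = 3) :
    secondEqn N q d x y < 0 := by
  have hN₁ : 1 < N := by linarith
  have hy₁ : 1 < y := by nlinarith
  have hx₁ : 1 < x := hy₁.trans_le hyx
  have hpow : 20 ≤ y ^ d := by
    refine (twenty_le_exp_three.trans (Real.exp_le_exp.2 ?_)).trans (exp_div_le_pow hN₁ hy)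
    rw [le_mul_iff_one_le_right three_pos, one_le_div (by positivity)]
    linarith
  have hpow_x : 20 ≤ x ^ d := hpow.trans (by gcongr)
  set E := Real.exp (d * ((1 - x⁻¹) / (y ^ d - 1)))
  have hratio : ratio d y x ^ d ≤ x ^ d * E := ratio_pow_le (by linarith) hx₁.le
  have hE : E + q / N ≤ 1.51 := exp_add_div_le hN₁ hq hqN hd hx₁.le hNx hy
  have : 0 ≤ y - 1 := by linarith
  calc secondEqn N q d x y ≤ (y - 1) * (x ^ d * E * N + (q - 1) * x ^ d) - x ^ d + 1 := by
        unfold secondEqn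
        gcongr
    _ = x ^ d * ((y - 1) * (N * (E + q / N) - 1) - 1) + 1 := by field_simp; ring
    _ ≤ x ^ d * ((y - 1) * (N * 1.51 - 1) - 1) + 1 := by gcongr
    _ ≤ x ^ d * (0.94 - 1) + 1 := by gcongr; nlinarith
    _ < 0 := by linarith

end Equations

theorem stmt16_general (N q : ℝ) (d : ℕ) (hN : 10 ≤ N) (hq : 1 ≤ q) (hqN : 3 * q ≤ N)
    (hd : 5 * (N + q) ≤ d) :
    ∃ x y : ℝ, y < x ∧ 1 + 1 / (2 * (N - 1)) < y ∧
      firstEqn N q d x y = 0 ∧ secondEqn N q d x y = 0 := by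
  have hd₀ : d ≠ 0 := by rintro rfl; norm_num at hd; linarith
  have hM : 0 < N - 1 := by linarith
  -- The factor `3 / 5` instead of `1 / 2` ensures `exp 3 ≤ a ^ d`, which the monotonicity and the
  -- sign on the bottom edge need.
  set a : ℝ := 1 + 3 / (5 * (N - 1)) with ha_def
  set b : ℝ := 1 + 1 / (N - 1) with hb_def
  have ha : 5 * (N - 1) * (a - 1) = 3 := by rw [ha_def]; field_simp; ring
  have hb : (N - 1) * (b - 1) = 1 := by rw [hb_def]; field_simp; ring
  have hab : a < b := by nlinarith
  have h_one_lt : ∀ s ∈ Icc a b, 1 < s := fun s hs => by nlinarith [hs.1]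
  have h_le : ∀ s ∈ Icc a b, (N - 1) * (s - 1) ≤ 1 := fun s hs => by nlinarith [hs.2]
  have hsub : Icc a b ×ˢ Icc a b ⊆ Ioi 1 ×ˢ Ioi 1 := prod_mono h_one_lt h_one_lt
  obtain ⟨x, y, hay, hyx, hf, hg⟩ := exists_lt_apply_eq_apply_eq (c := 0) hab.le
    ((continuousOn_firstEqn hd₀).mono hsub) ((continuousOn_secondEqn hd₀).mono hsub)
    (fun x hx => (strictMonoOn_secondEqn (by linarith) hq (by linarith) (h_one_lt x hx)
      (h_le x hx)).mono Icc_subset_Ici_self)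
    (fun x hx => secondEqn_neg hN (by linarith) hqN hd hx.1 (h_le x hx) ha)
    (fun x hx => secondEqn_pos (by linarith) (by linarith) hd₀ (h_one_lt x hx)
      (h_one_lt b (right_mem_Icc.2 hab.le)) hb.ge)
    (fun y hy => firstEqn_pos (by linarith) (by linarith) hd₀
      (h_one_lt b (right_mem_Icc.2 hab.le)) (h_one_lt y hy) hb.ge)
    (fun s hs => firstEqn_diag_lt_secondEqn_diag (by linarith) hd₀ (h_one_lt s hs))
  refine ⟨x, y, hyx, lt_trans ?_ hay, hf, hg⟩
  rw [ha_def, add_lt_add_iff_left, div_lt_div_iff₀ (by positivity) (by positivity)]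
  linarith

/-- Let `q ≥ 4` be an even integer, `k ≥ 2` an integer, and `d = 5q^k`. Then there exist
reals `x > y > 1 + 1/(2(q^k − q − 1))` with `f1(x, y) = 0` and `f2(x, y) = 0`. -/
theorem stmt16 (q k d : ℕ) (hq : 4 ≤ q) (heven : Even q) (hk : 2 ≤ k)
    (hd : d = 5 * q ^ k) :
    ∃ x y : ℝ, y < x ∧ 1 + 1 / (2 * ((q : ℝ) ^ k - q - 1)) < y ∧
      f1 q k d x y = 0 ∧ f2 q k d x y = 0 := by
  have hq' : (4 : ℝ) ≤ q := by exact_mod_cast hq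
  have hpow : (q : ℝ) ^ 2 ≤ (q : ℝ) ^ k := pow_le_pow_right₀ (by linarith) hk
  exact stmt16_general (q ^ k - q) q d (by nlinarith) (by linarith) (by nlinarith)
    (by rw [hd]; push_cast; linarith)
end
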